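/- arXiv:2603.22432 — 11 statements merged into one kernel-verified Lean document; each statement's English description precedes it below -/
import Mathlib

section
/- Let n ≥ 1 and let Q be a symmetric real n×n matrix with zero diagonal. Let t ∈ ℝ be such that (t·Q i j)² ≠ 1 for all indices i, j. Then det(I − t·B_Q) = det(I + D_t − A_t) · ∏_{i<j} (1 − (t·Q i j)²), where the determinant on the left is of a matrix indexed by the ordered pairs (i,j) of distinct indices, and the determinant on the right is of an n×n matrix. -/
/-!
Write `q i j = t * Q i j`. The condition `i ≠ ℓ` in the definition of `B_Q` only removes the
entries at which the second pair is the reversal of the first, so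
`I - t B_Q = (I + P) - T S`, where `P` (`ihbRev`) is the reversal of pairs weighted by `q`, `T`
(`ihbTarget`) sends a pair to its end point and `S` (`ihbSource`) is the start-point matrix weighted
by `q`.

As `Q` is symmetric, `P ^ 2` is diagonal with entries `q ^ 2`. Hence `I + P` has the inverse
`(I - P) (I - P ^ 2)⁻¹` (`ihbInv`), and splitting the ordered pairs into increasing and decreasing
ones gives `det (I + P) = ∏_{i<j} (1 - q i j ^ 2)` (`det_one_add_ihbRev`). The matrix determinant
lemma then reduces the left side to `det (I + P) * det (I - S (I + P)⁻¹ T)`, and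
`S (I + P)⁻¹ T = A_t - D_t` (`ihbSource_mul_inv_mul_target`).
-/

open Matrix Finset

/-- Index type for the non-backtracking matrix: ordered pairs of distinct indices. -/
abbrev NBIndex (n : ℕ) := {p : Fin n × Fin n // p.1 ≠ p.2}

/-- The non-backtracking matrix induced by a symmetric matrix `Q`:
`B_Q ((i,j),(k,ℓ)) = Q k ℓ` if `j = k` and `i ≠ ℓ`, and `0` otherwise. -/
noncomputable def nbMatrix {n : ℕ} (Q : Matrix (Fin n) (Fin n) ℝ) :
    Matrix (NBIndex n) (NBIndex n) ℝ :=
  fun e f => if e.1.2 = f.1.1 ∧ e.1.1 ≠ f.1.2 then Q f.1.1 f.1.2 else 0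

/-- The matrix `A_t` with `A_t i j = t·Q i j / (1 − (t·Q i j)²)`. -/
noncomputable def Amat {n : ℕ} (Q : Matrix (Fin n) (Fin n) ℝ) (t : ℝ) :
    Matrix (Fin n) (Fin n) ℝ :=
  fun i j => t * Q i j / (1 - (t * Q i j) ^ 2)

/-- The diagonal matrix `D_t` with `D_t i i = Σ_k (t·Q i k)² / (1 − (t·Q i k)²)`. -/
noncomputable def Dmat {n : ℕ} (Q : Matrix (Fin n) (Fin n) ℝ) (t : ℝ) :
    Matrix (Fin n) (Fin n) ℝ :=
  Matrix.diagonal (fun i => ∑ k, (t * Q i k) ^ 2 / (1 - (t * Q i k) ^ 2))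

/-- The reversal `(i, j) ↦ (j, i)` of ordered pairs of distinct indices. -/
def ihbSwap {n : ℕ} (e : NBIndex n) : NBIndex n := ⟨(e.1.2, e.1.1), e.2.symm⟩

lemma ihbSwap_swap {n : ℕ} (e : NBIndex n) : ihbSwap (ihbSwap e) = e := rfl

lemma ihbSwap_fst {n : ℕ} (e : NBIndex n) : (ihbSwap e).1.1 = e.1.2 := rfl

lemma ihbSwap_snd {n : ℕ} (e : NBIndex n) : (ihbSwap e).1.2 = e.1.1 := rfl

/-- The reversal of ordered pairs, as a matrix whose columns are weighted by `q`. -/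
def ihbRev {n : ℕ} (q : Matrix (Fin n) (Fin n) ℝ) : Matrix (NBIndex n) (NBIndex n) ℝ :=
  fun e f => if e = ihbSwap f then q f.1.1 f.1.2 else 0

/-- The incidence matrix between ordered pairs and their end points. -/
def ihbTarget (n : ℕ) : Matrix (NBIndex n) (Fin n) ℝ :=
  fun e v => if e.1.2 = v then 1 else 0

/-- The incidence matrix between start points and ordered pairs, weighted by `q`. -/
def ihbSource {n : ℕ} (q : Matrix (Fin n) (Fin n) ℝ) : Matrix (Fin n) (NBIndex n) ℝ :=
  fun v f => if f.1.1 = v then q f.1.1 f.1.2 else 0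

/-- The matrix `(I - P) (I - P ^ 2)⁻¹`, with `P = ihbRev q`, written out entrywise for a
symmetric `q`. -/
noncomputable def ihbInv {n : ℕ} (q : Matrix (Fin n) (Fin n) ℝ) :
    Matrix (NBIndex n) (NBIndex n) ℝ :=
  fun e f => (if e = f then 1 / (1 - q f.1.1 f.1.2 ^ 2) else 0)
    - (if e = ihbSwap f then q f.1.1 f.1.2 / (1 - q f.1.1 f.1.2 ^ 2) else 0)

lemma one_sub_smul_nbMatrix {n : ℕ} (Q : Matrix (Fin n) (Fin n) ℝ) (t : ℝ) :
    1 - t • nbMatrix Q = (1 + ihbRev (t • Q)) + (-ihbTarget n) * ihbSource (t • Q) := by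
  ext e f
  obtain ⟨⟨i, j⟩, hij⟩ := e
  obtain ⟨⟨k, l⟩, hkl⟩ := f
  have h : (ihbTarget n * ihbSource (t • Q)) ⟨(i, j), hij⟩ ⟨(k, l), hkl⟩
      = if k = j then t * Q k l else 0 := by
    simp [Matrix.mul_apply, ihbTarget, ihbSource, eq_comm]
  simp only [Matrix.sub_apply, Matrix.add_apply, Matrix.neg_mul, Matrix.neg_apply, h,
    Matrix.smul_apply, nbMatrix, ihbRev, ihbSwap, Subtype.mk.injEq, Prod.mk.injEq, smul_eq_mul]
  by_cases h1 : k = j <;> by_cases h2 : i = l <;> simp [h1, h2, eq_comm]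
  all_goals grind

lemma one_add_ihbRev_mul_inv {n : ℕ} (q : Matrix (Fin n) (Fin n) ℝ)
    (hsymm : ∀ i j, q i j = q j i) (hq : ∀ i j, q i j ^ 2 ≠ 1) :
    (1 + ihbRev q) * ihbInv q = 1 := by
  ext e f
  have hne : 1 - q f.1.1 f.1.2 ^ 2 ≠ 0 := sub_ne_zero.mpr (hq _ _).symm
  have hs : ∀ e f, (ihbRev q * ihbInv q) e f =
      (if e = ihbSwap f then q f.1.1 f.1.2 / (1 - q f.1.1 f.1.2 ^ 2) else 0)
      - (if e = f then q f.1.1 f.1.2 ^ 2 / (1 - q f.1.1 f.1.2 ^ 2) else 0) := by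
    intro e f
    simp only [Matrix.mul_apply, ihbInv, mul_sub, mul_ite, mul_zero, Finset.sum_sub_distrib,
      Finset.sum_ite_eq', Finset.mem_univ, if_true, ihbRev, ihbSwap_swap]
    simp only [ihbSwap_fst, ihbSwap_snd, hsymm f.1.2 f.1.1]
    split_ifs <;> ring
  rw [add_mul, one_mul, Matrix.add_apply, hs]
  simp only [ihbInv, Matrix.one_apply]
  split_ifs <;> field_simp <;> ring

/-- Ordered pairs of distinct indices are two copies of the increasing pairs: the pairs themselves
and their reversals. -/
lemma ihbSplit_bijective (n : ℕ) : Function.Bijective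
    (Sum.elim (fun p => ⟨p.1, p.2.ne⟩) (fun p => ⟨(p.1.2, p.1.1), p.2.ne'⟩) :
      {p : Fin n × Fin n // p.1 < p.2} ⊕ {p : Fin n × Fin n // p.1 < p.2} → NBIndex n) := by
  constructor
  · rintro (⟨⟨i, j⟩, h⟩ | ⟨⟨i, j⟩, h⟩) (⟨⟨k, l⟩, h'⟩ | ⟨⟨k, l⟩, h'⟩) heq <;>
      simp at heq h h' ⊢ <;> grind
  · rintro ⟨⟨i, j⟩, h⟩
    rcases lt_or_gt_of_ne h with h | h
    · exact ⟨Sum.inl ⟨(i, j), h⟩, rfl⟩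
    · exact ⟨Sum.inr ⟨(j, i), h⟩, rfl⟩

lemma det_one_add_ihbRev {n : ℕ} (q : Matrix (Fin n) (Fin n) ℝ)
    (hsymm : ∀ i j, q i j = q j i) :
    (1 + ihbRev q).det = ∏ p ∈ Finset.univ.filter (fun p : Fin n × Fin n => p.1 < p.2),
      (1 - q p.1 p.2 ^ 2) := by
  rw [← Matrix.det_submatrix_equiv_self (Equiv.ofBijective _ (ihbSplit_bijective n))]
  let d : {p : Fin n × Fin n // p.1 < p.2} → ℝ := fun p => q p.1.1 p.1.2
  have h : (1 + ihbRev q).submatrix (Equiv.ofBijective _ (ihbSplit_bijective n))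
      (Equiv.ofBijective _ (ihbSplit_bijective n))
      = Matrix.fromBlocks 1 (Matrix.diagonal d) (Matrix.diagonal d) 1 := by
    ext a b
    rcases a with ⟨⟨i, j⟩, h⟩ | ⟨⟨i, j⟩, h⟩ <;> rcases b with ⟨⟨k, l⟩, h'⟩ | ⟨⟨k, l⟩, h'⟩ <;>
      simp [ihbRev, ihbSwap, Matrix.one_apply, Matrix.diagonal_apply, d] at h h' ⊢ <;> grind
  rw [h, Matrix.det_fromBlocks_one₁₁, Matrix.diagonal_mul_diagonal, ← Matrix.diagonal_one,
    Matrix.diagonal_sub, Matrix.det_diagonal,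
    Finset.prod_subtype (p := fun p : Fin n × Fin n => p.1 < p.2) _ (by simp)]
  exact Finset.prod_congr rfl fun p _ => by simp only [d]; ring

lemma sum_nbIndex {n : ℕ} (g : Fin n → Fin n → ℝ) (hg : ∀ i, g i i = 0) :
    ∑ e : NBIndex n, g e.1.1 e.1.2 = ∑ i, ∑ j, g i j := by
  rw [← Fintype.sum_prod_type' (f := g),
    ← Finset.sum_subtype (Finset.univ.filter fun p : Fin n × Fin n => p.1 ≠ p.2) (by simp)
      (fun p => g p.1 p.2)]
  refine Finset.sum_filter_of_ne fun p _ hp h => hp ?_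
  rw [h, hg]

lemma ihbSource_mul_inv_mul_target {n : ℕ} (Q : Matrix (Fin n) (Fin n) ℝ)
    (hQsymm : ∀ i j, Q i j = Q j i) (hQdiag : ∀ i, Q i i = 0) (t : ℝ) :
    ihbSource (t • Q) * ihbInv (t • Q) * ihbTarget n = Amat Q t - Dmat Q t := by
  have hs : ∀ v f, (ihbSource (t • Q) * ihbInv (t • Q)) v f =
      (if f.1.1 = v then t * Q f.1.1 f.1.2 / (1 - (t * Q f.1.1 f.1.2) ^ 2) else 0)
      - (if f.1.2 = v then (t * Q f.1.1 f.1.2) ^ 2 / (1 - (t * Q f.1.1 f.1.2) ^ 2) else 0) := by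
    intro v f
    simp only [Matrix.mul_apply, ihbInv, mul_sub, mul_ite, mul_zero, Finset.sum_sub_distrib,
      Finset.sum_ite_eq', Finset.mem_univ, if_true, ihbSource]
    simp only [ihbSwap_fst, ihbSwap_snd, Matrix.smul_apply, smul_eq_mul, hQsymm f.1.2 f.1.1]
    split_ifs <;> ring
  ext v w
  -- The zero diagonal makes the summand vanish on the pairs that `NBIndex n` excludes.
  have h := sum_nbIndex (fun i j =>
      ((if i = v then t * Q i j / (1 - (t * Q i j) ^ 2) else 0)
      - (if j = v then (t * Q i j) ^ 2 / (1 - (t * Q i j) ^ 2) else 0))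
      * (if j = w then (1 : ℝ) else 0)) (by simp [hQdiag])
  rw [Matrix.mul_apply]
  simp only [hs, ihbTarget]
  rw [h]
  simp only [mul_ite, mul_one, mul_zero, Finset.sum_ite_eq', Finset.mem_univ, if_true,
    Finset.sum_sub_distrib, Matrix.sub_apply, Amat, Dmat, Matrix.diagonal_apply]
  congr 1
  by_cases hvw : v = w
  · subst hvw
    simp [hQsymm _ v]
  · simp [hvw, Ne.symm hvw]

/-- Generalised Ihara–Bass formula:
`det(I − t·B_Q) = det(I + D_t − A_t) · ∏_{i<j} (1 − (t·Q i j)²)`. -/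
theorem generalized_ihara_bass {n : ℕ} (hn : 1 ≤ n)
    (Q : Matrix (Fin n) (Fin n) ℝ) (hQsymm : Q.IsSymm) (hQdiag : ∀ i, Q i i = 0)
    (t : ℝ) (ht : ∀ i j, (t * Q i j) ^ 2 ≠ 1) :
    (1 - t • nbMatrix Q).det
      = (1 + Dmat Q t - Amat Q t).det *
        ∏ p ∈ Finset.univ.filter (fun p : Fin n × Fin n => p.1 < p.2),
          (1 - (t * Q p.1 p.2) ^ 2) := by
  have hs : ∀ i j, Q i j = Q j i := fun i j => hQsymm.apply j i
  have hs' : ∀ i j, (t • Q) i j = (t • Q) j i := fun i j => by simp [hs i j]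
  have hinv := one_add_ihbRev_mul_inv (t • Q) hs' (by simpa using ht)
  rw [one_sub_smul_nbMatrix, Matrix.det_add_mul _ _ (Matrix.isUnit_det_of_right_inverse hinv),
    Matrix.inv_eq_right_inv hinv, Matrix.mul_neg, ihbSource_mul_inv_mul_target Q hs hQdiag,
    det_one_add_ihbRev _ hs', mul_comm, neg_sub, add_sub_assoc]
  simp only [Matrix.smul_apply, smul_eq_mul]
end

section
/- Let n ≥ 1 and let Q be a symmetric real n×n matrix with zero diagonal. Let λ > 0 be such that |Q i j| ≤ λ for all i, j, and such that every μ in the complex spectrum of B_Q (viewed as a complex matrix by mapping its real entries into ℂ) satisfies ‖μ‖ ≤ λ. Then for every t ∈ ℝ with |t| < 1/λ, the matrix I + D_t − A_t is positive definite. -/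
/-!
The Bethe Hessian `H_t = I + D_t − A_t` is the identity at `t = 0`, is symmetric, and depends
continuously on `t` as long as `|t| < 1/λ`, where all denominators `1 − (t·Q i j)²` are positive.
Along such a path positive definiteness can only be lost at a parameter where `H_t` is singular
(`posDef_of_path`).

Singularity is excluded by the Ihara–Bass correspondence (`mem_spectrum_of_kernel`): for `t ≠ 0`,
put `q = t·Q`. Then a kernel vector `x` of `H_t` yields the edge vector
`f (i, j) = (x j − q i j · x i) / (1 − (q i j)²)`, which satisfies
`f (i, j) + q i j · f (j, i) = x j` and `∑ k, q i k · f (i, k) = x i`. These two identities say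
that `t·B_Q f = f`, and the second also shows `f ≠ 0` when `x ≠ 0`. Hence `1/t` lies in the
spectrum of `B_Q`, although `|1/t| > λ`.
-/

open Matrix Finset

/-- A continuous path of real symmetric matrices that starts at a positive definite matrix and
never meets a singular one ends at a positive definite matrix. -/
lemma posDef_of_path {n : ℕ} (M : ℝ → Matrix (Fin n) (Fin n) ℝ)
    (hcont : ContinuousOn M (Set.Icc 0 1)) (hsymm : ∀ s, (M s).IsHermitian)
    (h0 : (M 0).PosDef)
    (hker : ∀ s ∈ Set.Icc (0 : ℝ) 1, ∀ x, M s *ᵥ x = 0 → x = 0) : (M 1).PosDef := by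
  refine .of_dotProduct_mulVec_pos (hsymm 1) fun y hy => ?_
  by_contra hneg
  have hnorm : ∀ (s : ℝ) (x : Fin n → ℝ), star (‖x‖⁻¹ • x) ⬝ᵥ (M s *ᵥ (‖x‖⁻¹ • x))
      = ‖x‖⁻¹ ^ 2 * (star x ⬝ᵥ (M s *ᵥ x)) := by
    intro s x
    simp only [mulVec_smul, star_trivial, smul_dotProduct, dotProduct_smul, smul_eq_mul]
    ring
  have hsph : ∀ x : Fin n → ℝ, x ≠ 0 → ‖x‖⁻¹ • x ∈ Metric.sphere (0 : Fin n → ℝ) 1 := by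
    intro x hx
    simp [norm_smul, inv_mul_cancel₀ (norm_ne_zero_iff.mpr hx)]
  have hcomp : IsCompact (Set.Icc (0 : ℝ) 1 ×ˢ Metric.sphere (0 : Fin n → ℝ) 1) :=
    isCompact_Icc.prod (isCompact_sphere 0 1)
  have hq : ContinuousOn (fun p : ℝ × (Fin n → ℝ) => star p.2 ⬝ᵥ (M p.1 *ᵥ p.2))
      (Set.Icc (0 : ℝ) 1 ×ˢ Metric.sphere (0 : Fin n → ℝ) 1) := by
    have h1 : ContinuousOn (fun p : ℝ × (Fin n → ℝ) => M p.1)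
        (Set.Icc (0 : ℝ) 1 ×ˢ Metric.sphere (0 : Fin n → ℝ) 1) :=
      hcont.comp continuousOn_fst fun p hp => hp.1
    have h2 : ∀ i j, ContinuousOn (fun p : ℝ × (Fin n → ℝ) => M p.1 i j)
        (Set.Icc (0 : ℝ) 1 ×ˢ Metric.sphere (0 : Fin n → ℝ) 1) := fun i j =>
      (continuous_id.matrix_elem i j).comp_continuousOn h1
    simp only [dotProduct, mulVec, star_trivial]
    refine continuousOn_finsetSum _ fun i _ => ?_
    refine ContinuousOn.mul (by fun_prop) (continuousOn_finsetSum _ fun j _ => ?_)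
    exact (h2 i j).mul (by fun_prop)
  -- The compact set of pairs (parameter, unit vector) at which positivity fails.
  have hK := hcomp.of_isClosed_subset
    (hq.preimage_isClosed_of_isClosed hcomp.isClosed (isClosed_Iic (a := (0 : ℝ))))
    Set.inter_subset_left
  obtain ⟨⟨s₀, x₀⟩, ⟨⟨hs₀, hx₀⟩, hle⟩, hmin⟩ := hK.exists_isMinOn
    ⟨(1, ‖y‖⁻¹ • y), ⟨by simp, hsph y hy⟩, by
      change star (‖y‖⁻¹ • y) ⬝ᵥ (M 1 *ᵥ (‖y‖⁻¹ • y)) ≤ 0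
      rw [hnorm]
      exact mul_nonpos_of_nonneg_of_nonpos (by positivity) (not_lt.mp hneg)⟩
    (f := Prod.fst) continuousOn_fst
  change s₀ ∈ Set.Icc (0 : ℝ) 1 at hs₀
  change x₀ ∈ Metric.sphere (0 : Fin n → ℝ) 1 at hx₀
  change star x₀ ⬝ᵥ (M s₀ *ᵥ x₀) ≤ 0 at hle
  have hx₀' : x₀ ≠ 0 := by
    rintro rfl
    simp at hx₀
  have hs₀pos : 0 < s₀ := by
    refine lt_of_le_of_ne hs₀.1 fun h => ?_
    subst h
    exact absurd (h0.dotProduct_mulVec_pos hx₀') (not_lt.mpr hle)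
  -- All `M s` with `s` below the first failure parameter `s₀` are positive; take the limit `s → s₀`.
  have hpsd : (M s₀).PosSemidef := by
    refine .of_dotProduct_mulVec_nonneg (hsymm s₀) fun x => ?_
    by_cases hx : x = 0
    · simp [hx]
    have hlt : ∀ s ∈ Set.Ico 0 s₀, 0 ≤ star (‖x‖⁻¹ • x) ⬝ᵥ (M s *ᵥ (‖x‖⁻¹ • x)) := by
      intro s hs
      by_contra hc
      have h := hmin (a := (s, ‖x‖⁻¹ • x))
        ⟨⟨⟨hs.1, hs.2.le.trans hs₀.2⟩, hsph x hx⟩, (not_le.mp hc).le⟩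
      exact absurd hs.2 (not_lt.mpr h)
    have hc : ContinuousOn (fun s => star (‖x‖⁻¹ • x) ⬝ᵥ (M s *ᵥ (‖x‖⁻¹ • x)))
        (Set.Icc 0 1) :=
      hq.comp (f := fun s : ℝ => (s, ‖x‖⁻¹ • x)) (by fun_prop) fun s hs => ⟨hs, hsph x hx⟩
    have hlim : 0 ≤ star (‖x‖⁻¹ • x) ⬝ᵥ (M s₀ *ᵥ (‖x‖⁻¹ • x)) := by
      have hcl : s₀ ∈ closure (Set.Ico 0 s₀) := by
        rw [closure_Ico hs₀pos.ne]
        exact ⟨hs₀.1, le_rfl⟩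
      exact ContinuousWithinAt.closure_le hcl continuousWithinAt_const
        ((hc s₀ hs₀).mono fun s hs => ⟨hs.1, hs.2.le.trans hs₀.2⟩) hlt
    rw [hnorm] at hlim
    have : 0 < ‖x‖⁻¹ ^ 2 := by
      have := norm_pos_iff.mpr hx
      positivity
    exact nonneg_of_mul_nonneg_right hlim this
  -- A positive semidefinite form vanishing at `x₀` has `x₀` in its kernel.
  exact hx₀' (hker s₀ hs₀ x₀ ((hpsd.dotProduct_mulVec_zero_iff x₀).mp
    (le_antisymm hle (hpsd.dotProduct_mulVec_nonneg x₀))))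

/-- `B_Q` acts on an edge function by summing over all edges out of the endpoint and removing the
backtracking one. The sum may run over every `k`, and `F` may be arbitrary on the diagonal, since
`Q` vanishes there. -/
lemma nbMatrix_mulVec {n : ℕ} (Q : Matrix (Fin n) (Fin n) ℝ) (hQdiag : ∀ i, Q i i = 0)
    (F : Fin n → Fin n → ℝ) (e : NBIndex n) :
    (nbMatrix Q *ᵥ fun e => F e.1.1 e.1.2) e
      = ∑ k, Q e.1.2 k * F e.1.2 k - Q e.1.2 e.1.1 * F e.1.2 e.1.1 := by
  obtain ⟨⟨i, j⟩, hij⟩ := e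
  have h1 : (nbMatrix Q *ᵥ fun e => F e.1.1 e.1.2) ⟨(i, j), hij⟩
      = ∑ p : Fin n × Fin n, if j = p.1 ∧ i ≠ p.2 then Q p.1 p.2 * F p.1 p.2 else 0 := by
    simp only [mulVec, dotProduct, nbMatrix]
    rw [← Finset.sum_subtype (Finset.univ.filter fun p : Fin n × Fin n => p.1 ≠ p.2) (by simp)
      (fun p => (if j = p.1 ∧ i ≠ p.2 then Q p.1 p.2 else 0) * F p.1 p.2), Finset.sum_filter]
    refine Finset.sum_congr rfl fun p _ => ?_
    -- The excluded pairs `p.1 = p.2` contribute nothing because `Q` has zero diagonal.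
    by_cases hp : p.1 = p.2
    · simp [hp, hQdiag]
    · simp [hp, ite_mul]
  rw [h1, Fintype.sum_prod_type, Finset.sum_eq_single j]
  · have h2 : ∀ k, (if j = j ∧ i ≠ k then Q j k * F j k else 0)
        = Q j k * F j k - if i = k then Q j k * F j k else 0 := by
      intro k
      by_cases hk : i = k <;> simp [hk]
    rw [Finset.sum_congr rfl fun k _ => h2 k, Finset.sum_sub_distrib]
    simp
  · intro b _ hb
    simp [hb.symm]
  · simp

/-- One direction of the Ihara–Bass correspondence: singularity of the Bethe Hessian at `t`
makes `1/t` an eigenvalue of the non-backtracking matrix. -/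
lemma mem_spectrum_of_kernel {n : ℕ} (Q : Matrix (Fin n) (Fin n) ℝ) (hQsymm : Q.IsSymm)
    (hQdiag : ∀ i, Q i i = 0) (t : ℝ) (ht : t ≠ 0) (hden : ∀ i j, 1 - (t * Q i j) ^ 2 ≠ 0)
    (x : Fin n → ℝ) (hx : x ≠ 0) (hker : (1 + Dmat Q t - Amat Q t) *ᵥ x = 0) :
    ((t⁻¹ : ℝ) : ℂ) ∈ spectrum ℂ ((nbMatrix Q).map (algebraMap ℝ ℂ)) := by
  set F : Fin n → Fin n → ℝ := fun i j => (x j - t * Q i j * x i) / (1 - (t * Q i j) ^ 2) with hF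
  have hsymm : ∀ i j, Q j i = Q i j := fun i j => hQsymm.apply i j
  have hrev : ∀ i j, F i j + t * Q i j * F j i = x j := by
    intro i j
    have := hden i j
    simp only [hF, hsymm i j]
    generalize t * Q i j = q at this ⊢
    field_simp
    ring
  have hsum : ∀ i, ∑ k, t * Q i k * F i k = x i := by
    intro i
    have h := congrFun hker i
    rw [sub_mulVec, add_mulVec, one_mulVec, Dmat, Pi.sub_apply, Pi.add_apply,
      mulVec_diagonal, Finset.sum_mul, Pi.zero_apply] at h
    simp only [mulVec, dotProduct, Amat] at h
    have h2 : ∑ k, t * Q i k * F i k = ∑ k, t * Q i k / (1 - (t * Q i k) ^ 2) * x k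
        - ∑ k, (t * Q i k) ^ 2 / (1 - (t * Q i k) ^ 2) * x i := by
      rw [← Finset.sum_sub_distrib]
      refine Finset.sum_congr rfl fun k _ => ?_
      have := hden i k
      simp only [hF]
      field_simp
    linarith
  set f : NBIndex n → ℝ := fun e => F e.1.1 e.1.2 with hf
  -- `(B_Q f) (i, j)` is the full sum at `j`, which `hsum` evaluates as `x j / t`, minus the
  -- backtracking term, which `hrev` evaluates.
  have heig : nbMatrix Q *ᵥ f = t⁻¹ • f := by
    ext e
    rw [hf, nbMatrix_mulVec Q hQdiag F e]
    have h1 := hsum e.1.2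
    have h2 := hrev e.1.1 e.1.2
    simp only [mul_assoc, ← Finset.mul_sum] at h1 h2
    simp only [Pi.smul_apply, smul_eq_mul]
    rw [hsymm e.1.1 e.1.2, eq_inv_mul_iff_mul_eq₀ ht]
    linarith
  have hfne : f ≠ 0 := by
    intro h0
    apply hx
    ext i
    rw [← hsum i]
    refine Finset.sum_eq_zero fun k _ => ?_
    by_cases hik : i = k
    · simp [← hik, hQdiag]
    · have : F i k = 0 := congrFun h0 ⟨(i, k), hik⟩
      simp [this]
  rw [spectrum.mem_iff]
  intro hu
  have hinj := Matrix.mulVec_injective_of_isUnit hu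
  apply hfne
  have hz : (fun e => ((f e : ℝ) : ℂ)) = 0 := by
    apply hinj
    ext e
    have h := congrArg (algebraMap ℝ ℂ) (congrFun heig e)
    rw [RingHom.map_mulVec] at h
    rw [mulVec_zero, sub_mulVec, Pi.sub_apply, Pi.zero_apply, sub_eq_zero,
      Algebra.algebraMap_eq_smul_one, smul_mulVec, one_mulVec]
    simpa [Function.comp_def] using h.symm
  ext e
  simpa using congrFun hz e

/-- If all entries of `Q` are bounded by `λ` and the spectral radius of the
non-backtracking matrix `B_Q` is at most `λ`, then for every `t` with `|t| < 1/λ`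
the Bethe Hessian `I + D_t − A_t` is positive definite. -/
theorem betheHessian_posDef {n : ℕ} (hn : 1 ≤ n)
    (Q : Matrix (Fin n) (Fin n) ℝ) (hQsymm : Q.IsSymm) (hQdiag : ∀ i, Q i i = 0)
    (lam : ℝ) (hlam : 0 < lam) (hent : ∀ i j, |Q i j| ≤ lam)
    (hspec : ∀ μ ∈ spectrum ℂ ((nbMatrix Q).map (algebraMap ℝ ℂ)), ‖μ‖ ≤ lam)
    (t : ℝ) (ht : |t| < 1 / lam) :
    (1 + Dmat Q t - Amat Q t).PosDef := by
  have hsmall : ∀ s ∈ Set.Icc (0 : ℝ) 1, |s * t| * lam < 1 := by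
    intro s hs
    rw [abs_mul, abs_of_nonneg hs.1]
    have h1 : |t| * lam < 1 := (lt_div_iff₀ hlam).mp ht
    have h2 : 0 ≤ |t| * lam := by positivity
    nlinarith [hs.2]
  have hden : ∀ s ∈ Set.Icc (0 : ℝ) 1, ∀ i j, 1 - (s * t * Q i j) ^ 2 ≠ 0 := by
    intro s hs i j
    have h : |s * t * Q i j| < 1 := by
      rw [abs_mul]
      exact (mul_le_mul_of_nonneg_left (hent i j) (abs_nonneg _)).trans_lt (hsmall s hs)
    have := (sq_lt_one_iff_abs_lt_one _).mpr h
    linarith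
  have hzero : 1 + Dmat Q 0 - Amat Q 0 = 1 := by
    have hD : Dmat Q 0 = 0 := by
      ext i j
      simp [Dmat]
    have hA : Amat Q 0 = 0 := by
      ext i j
      simp [Amat]
    rw [hD, hA, add_zero, sub_zero]
  have key := posDef_of_path (fun s => 1 + Dmat Q (s * t) - Amat Q (s * t)) ?_ ?_ ?_ ?_
  · simpa using key
  · have hA : ContinuousOn (fun s : ℝ => Amat Q (s * t)) (Set.Icc 0 1) := by
      refine continuousOn_pi.mpr fun i => continuousOn_pi.mpr fun j => ?_
      exact ContinuousOn.div (by fun_prop) (by fun_prop) fun s hs => hden s hs i j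
    have hD : ContinuousOn (fun s : ℝ => Dmat Q (s * t)) (Set.Icc 0 1) := by
      refine (continuous_id.matrix_diagonal).comp_continuousOn
        (continuousOn_pi.mpr fun i => continuousOn_finsetSum _ fun k _ => ?_)
      exact ContinuousOn.div (by fun_prop) (by fun_prop) fun s hs => hden s hs i k
    exact (continuousOn_const.add hD).sub hA
  · intro s
    refine (isHermitian_one.add (isHermitian_diagonal _)).sub ?_
    ext i j
    simp [Amat, hQsymm.apply i j]
  · simp only [zero_mul, hzero]
    exact PosDef.one
  · intro s hs x hx
    by_contra hne
    by_cases hst : s * t = 0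
    · simp only [hst, hzero, one_mulVec] at hx
      exact hne hx
    have h := hspec _ (mem_spectrum_of_kernel Q hQsymm hQdiag (s * t) hst (hden s hs) x hne hx)
    rw [Complex.norm_real, Real.norm_eq_abs, abs_inv] at h
    have hpos : 0 < |s * t| := abs_pos.mpr hst
    have h3 : 1 ≤ |s * t| * lam := by
      rwa [inv_le_iff_one_le_mul₀ hpos, mul_comm] at h
    exact absurd (hsmall s hs) (not_lt.mpr h3)
end

section
/- Let N ≥ 1 and let K and L be symmetric real N×N matrices. Suppose there exist reals α > 0, η₁ > 0 and η₂ with 0 < η₂ ≤ 1 such that ‖K‖₂ ≤ α, the matrix L − η₁·I is positive semidefinite, and the matrix (η₂/α)·I − L is positive semidefinite. Then the matrix L − L·K·L − η₁·(1−η₂)·I is positive semidefinite. -/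
/-!
Since `‖K‖₂ ≤ α`, Cauchy–Schwarz gives `α·I − K ⪰ 0`. With `c = η₂/α`, the difference splits as
`L − L·K·L − η₁(1−η₂)·I = L(α·I − K)L + α·L(c·I − L) + (1−η₂)(L − η₁·I)`.
The first and last summands are visibly positive semidefinite; for the middle one, the two
commuting matrices `L, c·I − L ⪰ 0` add up to `c·I`, so
`c·L(c·I − L) = L(c·I − L)L + (c·I − L)L(c·I − L) ⪰ 0`.
-/

open Matrix

/-- The ℓ²→ℓ² operator norm of a square real matrix. -/
noncomputable def opNorm {ι : Type*} [Fintype ι] [DecidableEq ι]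
    (M : Matrix ι ι ℝ) : ℝ :=
  ‖Matrix.toEuclideanCLM (𝕜 := ℝ) M‖

/-- Cauchy–Schwarz bounds the quadratic form of `K` by `‖K‖₂‖x‖²`. -/
theorem posSemidef_smul_one_sub {N : ℕ} {K : Matrix (Fin N) (Fin N) ℝ} (hK : K.IsSymm)
    {α : ℝ} (hKnorm : opNorm K ≤ α) :
    (α • (1 : Matrix (Fin N) (Fin N) ℝ) - K).PosSemidef := by
  refine PosSemidef.of_dotProduct_mulVec_nonneg ?_ fun x => ?_
  · rw [Matrix.IsHermitian, conjTranspose_eq_transpose_of_trivial]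
    simp [hK.eq]
  · set y : EuclideanSpace ℝ (Fin N) := WithLp.toLp 2 x
    have hinner : inner ℝ y (toEuclideanCLM (𝕜 := ℝ) K y) = x ⬝ᵥ K *ᵥ x := by
      rw [inner_toEuclideanCLM]
    have hyy : ‖y‖ * ‖y‖ = x ⬝ᵥ x := by
      rw [← sq, EuclideanSpace.real_norm_sq_eq]
      simp [y, dotProduct, sq]
    have hbound : x ⬝ᵥ K *ᵥ x ≤ α * (x ⬝ᵥ x) := by
      calc x ⬝ᵥ K *ᵥ x = inner ℝ y (toEuclideanCLM (𝕜 := ℝ) K y) := hinner.symm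
        _ ≤ ‖y‖ * ‖toEuclideanCLM (𝕜 := ℝ) K y‖ := real_inner_le_norm _ _
        _ ≤ ‖y‖ * (α * ‖y‖) := by
          gcongr
          exact ContinuousLinearMap.le_of_opNorm_le _ hKnorm y
        _ = α * (x ⬝ᵥ x) := by rw [← hyy]; ring
    simp only [star_trivial, sub_mulVec, smul_mulVec, one_mulVec, dotProduct_sub,
      dotProduct_smul, smul_eq_mul]
    linarith

/-- `A(c·I − A) ⪰ 0` when `A` and `c·I − A` are positive semidefinite. -/
theorem posSemidef_smul_sub_mul_self {N : ℕ} {A : Matrix (Fin N) (Fin N) ℝ} {c : ℝ} (hc : 0 < c)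
    (hA : A.PosSemidef) (hcA : (c • (1 : Matrix (Fin N) (Fin N) ℝ) - A).PosSemidef) :
    (c • A - A * A).PosSemidef := by
  have h₁ := hcA.mul_mul_conjTranspose_same A
  have h₂ := hA.mul_mul_conjTranspose_same (c • (1 : Matrix (Fin N) (Fin N) ℝ) - A)
  rw [hA.isHermitian.eq] at h₁
  rw [hcA.isHermitian.eq] at h₂
  convert (h₁.add h₂).smul (inv_nonneg.2 hc.le) using 1
  rw [eq_inv_smul_iff₀ hc.ne']
  simp only [mul_sub, sub_mul, Matrix.smul_mul, Matrix.mul_smul, Matrix.one_mul, Matrix.mul_one,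
    smul_sub]
  abel

/-- If `‖K‖₂ ≤ α` and `η₁·I ⪯ L ⪯ (η₂/α)·I` with `0 < η₂ ≤ 1`, then
`L − L·K·L ⪰ η₁·(1−η₂)·I`. -/
theorem sub_conj_posSemidef {N : ℕ} (hN : 1 ≤ N)
    (K L : Matrix (Fin N) (Fin N) ℝ) (hK : K.IsSymm) (hL : L.IsSymm)
    (α η₁ η₂ : ℝ) (hα : 0 < α) (hη₁ : 0 < η₁) (hη₂ : 0 < η₂) (hη₂' : η₂ ≤ 1)
    (hKnorm : opNorm K ≤ α)
    (h1 : (L - η₁ • (1 : Matrix (Fin N) (Fin N) ℝ)).PosSemidef)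
    (h2 : ((η₂ / α) • (1 : Matrix (Fin N) (Fin N) ℝ) - L).PosSemidef) :
    (L - L * K * L - (η₁ * (1 - η₂)) • (1 : Matrix (Fin N) (Fin N) ℝ)).PosSemidef := by
  have hLpos : L.PosSemidef := by
    simpa using h1.add ((PosSemidef.one (n := Fin N) (R := ℝ)).smul hη₁.le)
  have hKL := (posSemidef_smul_one_sub hK hKnorm).mul_mul_conjTranspose_same L
  rw [hLpos.isHermitian.eq] at hKL
  have hmid := (posSemidef_smul_sub_mul_self (div_pos hη₂ hα) hLpos h2).smul hα.le
  convert (hKL.add hmid).add (h1.smul (sub_nonneg.2 hη₂')) using 1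
  simp only [mul_sub, sub_mul, Matrix.smul_mul, Matrix.mul_smul, Matrix.mul_one, smul_sub,
    smul_smul, mul_div_cancel₀ _ hα.ne', sub_smul, one_smul]
  module
end

section
/- Let V be a finite nonempty type, let M₁, M₂ : Matrix V V ℝ be symmetric with M₁ positive definite, let β > 0 and h : V → ℝ. Suppose there exists a symmetric positive definite matrix Γ : Matrix V V ℝ such that for every z : V → ℝ the matrix (β·M₁) − (β·M₁) · Cov(M₂, β, M₁·z + h) · (β·M₁) − Γ is positive semidefinite. Then Γ⁻¹ − Cov(M₁ + M₂, β, h) is positive semidefinite. -/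
/-!
Write `K = β M₁`. By the Hubbard–Stratonovich identity, completing the square in the exponent,
`Z_{M₁+M₂}(h + θ)` is, up to a constant independent of `θ`, the Lebesgue integral over `z` of
`F_θ(z) = exp (-½ zᵀKz) Z_{M₂}(Kz + h + θ)` (`hubbard_stratonovich_lintegral`). The hypothesis says
that `-log F_0` has Hessian at least `Γ`: the Hessian of `log Z_{M₂}` is the Gibbs covariance, and
the fields `M₁ z + h` exhaust all fields since `M₁` is invertible. The conclusion is thus an instance
of the Brascamp–Lieb inequality, which is obtained here from the Prékopa–Leindler inequality.

Integrating the Hessian bound along a segment (`mgf_le_of_var`, `gibbsZ_shift_mul_le`) yields the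
pointwise inequality `F_v(x) F_{-v}(y) ≤ exp (vᵀΓ⁻¹v) F_0((x + y) / 2)²`. Prékopa–Leindler with equal
weights (`prekopa_leindler_pi`) turns it into
`Z_{M₁+M₂}(h + v) Z_{M₁+M₂}(h - v) ≤ exp (vᵀΓ⁻¹v) Z_{M₁+M₂}(h)²` (`gibbsZ_add_mul_le`). Replacing `v`
by `t v` and comparing the terms of order `t²` as `t → 0` (`var_le_of_mgf`) gives
`vᵀ Cov v ≤ vᵀ Γ⁻¹ v`.
-/

open Matrix Finset

/-- The ±1 spin value of a Boolean configuration at a site. -/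
noncomputable def spin {V : Type*} (s : V → Bool) (v : V) : ℝ :=
  if s v then 1 else -1

/-- Unnormalised Gibbs weight of a configuration for the 2-spin model with
interaction matrix `J`, inverse temperature `β` and external field `h`. -/
noncomputable def gibbsWeight {V : Type*} [Fintype V] (J : Matrix V V ℝ)
    (β : ℝ) (h : V → ℝ) (s : V → Bool) : ℝ :=
  Real.exp (β / 2 * ∑ u, ∑ v, spin s u * J u v * spin s v + ∑ u, h u * spin s u)

/-- Partition function of the 2-spin model. -/
noncomputable def gibbsZ {V : Type*} [Fintype V] [DecidableEq V]
    (J : Matrix V V ℝ) (β : ℝ) (h : V → ℝ) : ℝ :=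
  ∑ s : V → Bool, gibbsWeight J β h s

/-- Gibbs probability of a configuration for the 2-spin model. -/
noncomputable def gibbsProb {V : Type*} [Fintype V] [DecidableEq V]
    (J : Matrix V V ℝ) (β : ℝ) (h : V → ℝ) (s : V → Bool) : ℝ :=
  gibbsWeight J β h s / gibbsZ J β h

/-- Expectation of an observable under the 2-spin Gibbs distribution. -/
noncomputable def gibbsExp {V : Type*} [Fintype V] [DecidableEq V]
    (J : Matrix V V ℝ) (β : ℝ) (h : V → ℝ) (f : (V → Bool) → ℝ) : ℝ :=
  ∑ s : V → Bool, gibbsProb J β h s * f s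

/-- Covariance matrix of the 2-spin Gibbs distribution:
`Cov(J,β,h)(u,v) = E[σ(u)σ(v)] − E[σ(u)]·E[σ(v)]`. -/
noncomputable def gibbsCov {V : Type*} [Fintype V] [DecidableEq V]
    (J : Matrix V V ℝ) (β : ℝ) (h : V → ℝ) : Matrix V V ℝ :=
  Matrix.of fun u v =>
    gibbsExp J β h (fun s => spin s u * spin s v)
      - gibbsExp J β h (fun s => spin s u) * gibbsExp J β h (fun s => spin s v)

open MeasureTheory

/-! ### The Prékopa–Leindler inequality -/

/-- One-dimensional Brunn–Minkowski for compact sets: with `a = max K` and `b = min L`, the translates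
`K + b` and `a + L` both lie in `K + L` and meet in the single point `a + b`. -/
lemma volume_add_le_of_isCompact {K L C : Set ℝ} (hK : IsCompact K) (hL : IsCompact L)
    (hK0 : K.Nonempty) (hL0 : L.Nonempty)
    (h : ∀ a ∈ K, ∀ b ∈ L, (a + b) / 2 ∈ C) :
    volume K + volume L ≤ 2 * volume C := by
  obtain ⟨a, haK, ha⟩ := hK.exists_isGreatest hK0
  obtain ⟨b, hbL, hb⟩ := hL.exists_isLeast hL0
  have hD : volume ((fun z => (1/2:ℝ) * z) ⁻¹' C) = 2 * volume C := by
    rw [Real.volume_preimage_mul_left (by norm_num)]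
    norm_num
  rw [← hD]
  have e1 : volume ((fun z => z + (-b)) ⁻¹' K) = volume K := measure_preimage_add_right _ _ _
  have e2 : volume ((fun z => z + (-a)) ⁻¹' L) = volume L := measure_preimage_add_right _ _ _
  have hmeas : MeasurableSet ((fun z => z + (-a)) ⁻¹' L) :=
    (measurable_add_const (-a)) hL.measurableSet
  have hdisj : AEDisjoint volume ((fun z => z + (-b)) ⁻¹' K) ((fun z => z + (-a)) ⁻¹' L) := by
    refine measure_mono_null (t := {a + b}) ?_ (by simp)
    rintro z ⟨h1, h2⟩
    have := ha h1
    have := hb h2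
    simp only [Set.mem_singleton_iff]
    linarith
  rw [← e1, ← e2, ← measure_union₀ hmeas.nullMeasurableSet hdisj]
  refine measure_mono ?_
  rintro z (hz | hz)
  · have := h _ hz _ hbL
    simp only [Set.mem_preimage]
    convert this using 1; ring
  · have := h _ haK _ hz
    simp only [Set.mem_preimage]
    convert this using 1; ring

/-- Inner regularity: a bound on `volume K + x` for compact `K ⊆ A` passes to `A` itself. -/
lemma volume_add_le_of_compact {A : Set ℝ} (hA : MeasurableSet A) (hA0 : A.Nonempty)
    {x c : ENNReal} (hx : x ≠ ⊤)
    (h : ∀ K ⊆ A, IsCompact K → K.Nonempty → volume K + x ≤ c) : volume A + x ≤ c := by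
  obtain ⟨a, ha⟩ := hA0
  have hxc : x ≤ c := le_add_self.trans
    (h {a} (Set.singleton_subset_iff.2 ha) isCompact_singleton (Set.singleton_nonempty a))
  refine add_le_of_le_tsub_right_of_le hxc (le_of_forall_lt fun r hr => ?_)
  obtain ⟨K, hKA, hK, hrK⟩ := hA.exists_lt_isCompact hr
  refine (hrK.trans_le (measure_mono (Set.subset_insert a K))).trans_le ?_
  exact ENNReal.le_sub_of_add_le_right hx
    (h _ (Set.insert_subset ha hKA) (hK.insert a) (Set.insert_nonempty a K))

/-- One-dimensional Brunn–Minkowski for measurable sets. The set `C` containing all midpoints need not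
be measurable, so that no measurability of Minkowski sums is required. -/
lemma volume_add_le {A B C : Set ℝ} (hA : MeasurableSet A) (hB : MeasurableSet B)
    (hA0 : A.Nonempty) (hB0 : B.Nonempty)
    (h : ∀ a ∈ A, ∀ b ∈ B, (a + b) / 2 ∈ C) :
    volume A + volume B ≤ 2 * volume C := by
  have step : ∀ L ⊆ B, IsCompact L → L.Nonempty → volume L + volume A ≤ 2 * volume C := by
    intro L hLB hL hL0
    rw [add_comm]
    refine volume_add_le_of_compact hA hA0 hL.measure_ne_top fun K hKA hK hK0 => ?_
    exact volume_add_le_of_isCompact hK hL hK0 hL0 fun a ha b hb => h a (hKA ha) b (hLB hb)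
  by_cases hAt : volume A = ⊤
  · obtain ⟨b, hb⟩ := hB0
    have := step {b} (Set.singleton_subset_iff.2 hb) isCompact_singleton
      (Set.singleton_nonempty b)
    rw [hAt, add_top, top_le_iff] at this
    rw [this]
    exact le_top
  · rw [add_comm]
    exact volume_add_le_of_compact hB hB0 hAt step

lemma four_mul_le_add_sq_ennreal (x y : ENNReal) : 4 * (x * y) ≤ (x + y) ^ 2 := by
  wlog h : x ≤ y generalizing x y
  · rw [mul_comm x, add_comm]; exact this y x (le_of_not_ge h)
  obtain ⟨d, rfl⟩ := exists_add_of_le h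
  calc 4 * (x * (x + d)) ≤ 4 * (x * (x + d)) + d ^ 2 := le_self_add
    _ = _ := by ring

/-- For functions with supremum `1` the stronger additive inequality holds, by applying
Brunn–Minkowski to the superlevel sets, all of which are nonempty below level `1`. -/
lemma prekopa_leindler_normalized {f g m : ℝ → ENNReal} (hf : Measurable f) (hg : Measurable g)
    (hm : Measurable m) (hf1 : ⨆ x, f x = 1) (hg1 : ⨆ x, g x = 1)
    (h : ∀ x y, f x * g y ≤ m ((x + y) / 2) ^ 2) :
    (∫⁻ x, f x) + ∫⁻ x, g x ≤ 2 * ∫⁻ x, m x := by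
  have key : ∀ (u : ℝ → ENNReal), Measurable u → (∀ x, u x ≤ 1) →
      ∫⁻ x, u x = ∫⁻ t in Set.Ioi (0:ℝ), volume {x | ENNReal.ofReal t < u x} := by
    intro u hu hu1
    have hfin : ∀ x, u x ≠ ⊤ := fun x => ne_top_of_le_ne_top ENNReal.one_ne_top (hu1 x)
    have h1 : ∫⁻ x, u x = ∫⁻ x, ENNReal.ofReal (u x).toReal :=
      lintegral_congr fun x => (ENNReal.ofReal_toReal (hfin x)).symm
    rw [h1, lintegral_eq_lintegral_meas_lt _ (Filter.Eventually.of_forall fun x =>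
      ENNReal.toReal_nonneg) hu.ennreal_toReal.aemeasurable]
    refine setLIntegral_congr_fun measurableSet_Ioi fun t ht => ?_
    congr 1
    ext x
    simp only [Set.mem_ofPred_eq]
    rw [ENNReal.ofReal_lt_iff_lt_toReal (le_of_lt ht) (hfin x)]
  have hf' : ∀ x, f x ≤ 1 := fun x => hf1 ▸ le_iSup f x
  have hg' : ∀ x, g x ≤ 1 := fun x => hg1 ▸ le_iSup g x
  have hm' : ∫⁻ x, min (m x) 1 ≤ ∫⁻ x, m x := lintegral_mono fun x => min_le_left _ _
  -- Capping `m` at `1` makes it finite, hence amenable to the real-valued layer-cake formula.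
  refine le_trans ?_ (mul_le_mul_right hm' 2)
  rw [key f hf hf', key g hg hg', key _ (hm.min measurable_const) fun x => min_le_right _ _]
  refine (le_lintegral_add _ _).trans ?_
  rw [← lintegral_const_mul' _ _ (by norm_num)]
  refine setLIntegral_mono' measurableSet_Ioi fun t ht => ?_
  -- Above level `1` all superlevel sets are empty.
  rcases lt_or_ge (ENNReal.ofReal t) 1 with h1 | h1
  · refine volume_add_le (measurableSet_lt measurable_const hf)
      (measurableSet_lt measurable_const hg) ?_ ?_ ?_
    · exact lt_iSup_iff.1 (hf1.symm ▸ h1)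
    · exact lt_iSup_iff.1 (hg1.symm ▸ h1)
    · intro a ha b hb
      refine lt_min ?_ h1
      by_contra hcon
      have h2 := h a b
      have h3 : ENNReal.ofReal t * ENNReal.ofReal t < f a * g b := ENNReal.mul_lt_mul ha hb
      have h4 : m ((a + b) / 2) ^ 2 ≤ ENNReal.ofReal t * ENNReal.ofReal t := by
        rw [sq]; exact mul_le_mul' (not_lt.1 hcon) (not_lt.1 hcon)
      exact absurd (h3.trans_le (h2.trans h4)) (lt_irrefl _)
  · have e1 : {x | ENNReal.ofReal t < f x} = ∅ := by
      ext x; simpa using (hf' x).trans h1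
    have e2 : {x | ENNReal.ofReal t < g x} = ∅ := by
      ext x; simpa using (hg' x).trans h1
    simp [e1, e2]

/-- Bounded functions are rescaled to have supremum `1`; the AM–GM inequality then gives the product
form. -/
lemma prekopa_leindler_bounded {f g m : ℝ → ENNReal} (hf : Measurable f) (hg : Measurable g)
    (hm : Measurable m) (hf1 : ⨆ x, f x ≠ ⊤) (hg1 : ⨆ x, g x ≠ ⊤)
    (h : ∀ x y, f x * g y ≤ m ((x + y) / 2) ^ 2) :
    (∫⁻ x, f x) * ∫⁻ x, g x ≤ (∫⁻ x, m x) ^ 2 := by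
  set a := ⨆ x, f x with ha
  set b := ⨆ x, g x with hb
  rcases eq_or_ne a 0 with ha0 | ha0
  · have : ∀ x, f x = 0 := fun x => le_antisymm (ha0 ▸ le_iSup f x) bot_le
    simp [this]
  rcases eq_or_ne b 0 with hb0 | hb0
  · have : ∀ x, g x = 0 := fun x => le_antisymm (hb0 ▸ le_iSup g x) bot_le
    simp [this]
  obtain ⟨c, hc⟩ : ∃ c : ENNReal, c ^ 2 = a * b :=
    ⟨(a * b) ^ (2⁻¹ : ℝ), by
      rw [← ENNReal.rpow_natCast, ← ENNReal.rpow_mul]; norm_num⟩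
  have hab0 : a * b ≠ 0 := mul_ne_zero ha0 hb0
  have habt : a * b ≠ ⊤ := ENNReal.mul_ne_top hf1 hg1
  have hc0 : c ≠ 0 := by rintro rfl; exact hab0 (by rw [← hc]; simp)
  have hct : c ≠ ⊤ := by rintro rfl; exact habt (by rw [← hc]; simp)
  have hinv : (c⁻¹) ^ 2 = a⁻¹ * b⁻¹ := by
    rw [← ENNReal.mul_inv (Or.inl ha0) (Or.inl hf1), ← hc, ENNReal.inv_pow]
  have := prekopa_leindler_normalized (f := fun x => a⁻¹ * f x) (g := fun x => b⁻¹ * g x)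
    (m := fun x => c⁻¹ * m x) (hf.const_mul _) (hg.const_mul _) (hm.const_mul _)
    (by rw [← ENNReal.mul_iSup, ← ha, ENNReal.inv_mul_cancel ha0 hf1])
    (by rw [← ENNReal.mul_iSup, ← hb, ENNReal.inv_mul_cancel hb0 hg1])
    (by
      intro x y
      rw [mul_pow, hinv]
      calc _ = a⁻¹ * b⁻¹ * (f x * g y) := by ring
        _ ≤ _ := by gcongr; exact h x y)
  rw [lintegral_const_mul _ hf, lintegral_const_mul _ hg, lintegral_const_mul _ hm] at this
  set F := ∫⁻ x, f x
  set G := ∫⁻ x, g x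
  set M := ∫⁻ x, m x
  have h2 : 4 * ((a⁻¹ * b⁻¹) * (F * G)) ≤ 4 * ((a⁻¹ * b⁻¹) * M ^ 2) := by
    calc _ = 4 * ((a⁻¹ * F) * (b⁻¹ * G)) := by ring
      _ ≤ (a⁻¹ * F + b⁻¹ * G) ^ 2 := four_mul_le_add_sq_ennreal _ _
      _ ≤ (2 * (c⁻¹ * M)) ^ 2 := by gcongr
      _ = 4 * (c⁻¹ ^ 2 * M ^ 2) := by ring
      _ = _ := by rw [hinv]
  rw [ENNReal.mul_le_mul_iff_right (by norm_num) (by norm_num)] at h2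
  rwa [ENNReal.mul_le_mul_iff_right] at h2
  · exact mul_ne_zero (ENNReal.inv_ne_zero.2 hf1) (ENNReal.inv_ne_zero.2 hg1)
  · exact ENNReal.mul_ne_top (ENNReal.inv_ne_top.2 ha0) (ENNReal.inv_ne_top.2 hb0)

/-- The Prékopa–Leindler inequality on `ℝ` with equal weights; `f` and `g` are truncated at height `n`,
and monotone convergence removes the truncation. -/
lemma prekopa_leindler_real {f g m : ℝ → ENNReal} (hf : Measurable f) (hg : Measurable g)
    (hm : Measurable m)
    (h : ∀ x y, f x * g y ≤ m ((x + y) / 2) ^ 2) :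
    (∫⁻ x, f x) * ∫⁻ x, g x ≤ (∫⁻ x, m x) ^ 2 := by
  have key : ∀ u : ℝ → ENNReal, Measurable u →
      ∫⁻ x, u x = ⨆ n : ℕ, ∫⁻ x, min (u x) n := by
    intro u hu
    rw [← lintegral_iSup (fun n => hu.min measurable_const)]
    · refine lintegral_congr fun x => ?_
      rw [← inf_iSup_eq, ENNReal.iSup_natCast, inf_top_eq]
    · intro i j hij x
      exact min_le_min le_rfl (by exact_mod_cast hij)
  have hb : ∀ (u : ℝ → ENNReal) (n : ℕ), ⨆ x, min (u x) n ≠ ⊤ := fun u n =>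
    ne_top_of_le_ne_top (ENNReal.natCast_ne_top n) (iSup_le fun x => min_le_right _ _)
  rw [key f hf, key g hg, ENNReal.iSup_mul]
  refine iSup_le fun i => ?_
  rw [ENNReal.mul_iSup]
  refine iSup_le fun j => ?_
  refine prekopa_leindler_bounded (hf.min measurable_const) (hg.min measurable_const) hm
    (hb f i) (hb g j) ?_
  exact fun x y => (mul_le_mul' (min_le_left _ _) (min_le_left _ _)).trans (h x y)

lemma lintegral_fin_succ {n : ℕ} {f : (Fin (n + 1) → ℝ) → ENNReal} (hf : Measurable f) :
    ∫⁻ x, f x = ∫⁻ t : ℝ, ∫⁻ x : Fin n → ℝ, f (Fin.cons t x) := by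
  have e := (volume_preserving_piFinSuccAbove (fun _ : Fin (n + 1) => ℝ) 0).symm
  rw [← e.lintegral_comp hf, Measure.volume_eq_prod, lintegral_prod]
  · refine lintegral_congr fun t => lintegral_congr fun x => ?_
    rw [MeasurableEquiv.piFinSuccAbove_symm_apply, Fin.insertNthEquiv_zero]
    rfl
  · exact (hf.comp (MeasurableEquiv.measurable _)).aemeasurable

/-- Tensorization: the integrals over the last `n` coordinates again satisfy the hypothesis, as
functions of the first coordinate. -/
lemma prekopa_leindler_fin (n : ℕ) : ∀ {f g m : (Fin n → ℝ) → ENNReal}, Measurable f → Measurable g →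
    Measurable m → (∀ x y, f x * g y ≤ m (fun i => (x i + y i) / 2) ^ 2) →
    (∫⁻ x, f x) * ∫⁻ x, g x ≤ (∫⁻ x, m x) ^ 2 := by
  induction n with
  | zero =>
    intro f g m hf hg hm h
    rw [Measure.volume_pi_eq_dirac (0 : Fin 0 → ℝ)]
    simp only [lintegral_dirac]
    convert h 0 0
  | succ n ih =>
    intro f g m hf hg hm h
    have hc : Measurable (fun p : ℝ × (Fin n → ℝ) => (Fin.cons p.1 p.2 : Fin (n + 1) → ℝ)) := by
      refine measurable_pi_iff.2 fun i => ?_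
      refine Fin.cases ?_ (fun j => ?_) i
      · simpa using measurable_fst
      · simp only [Fin.cons_succ]; fun_prop
    rw [lintegral_fin_succ hf, lintegral_fin_succ hg, lintegral_fin_succ hm]
    refine prekopa_leindler_real (Measurable.lintegral_prod_right' (hf.comp hc))
      (Measurable.lintegral_prod_right' (hg.comp hc))
      (Measurable.lintegral_prod_right' (hm.comp hc)) fun s t => ?_
    have hs : ∀ s : ℝ, Measurable (fun x : Fin n → ℝ => (Fin.cons s x : Fin (n + 1) → ℝ)) :=
      fun s => hc.comp measurable_prodMk_left
    refine ih (hf.comp (hs s)) (hg.comp (hs t)) (hm.comp (hs _)) fun x y => ?_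
    convert h (Fin.cons s x) (Fin.cons t y) using 3
    ext i
    refine Fin.cases ?_ (fun j => ?_) i <;> simp

/-- The Prékopa–Leindler inequality with equal weights on `ι → ℝ`. -/
lemma prekopa_leindler_pi {ι : Type*} [Fintype ι] {f g m : (ι → ℝ) → ENNReal} (hf : Measurable f)
    (hg : Measurable g) (hm : Measurable m)
    (h : ∀ x y, f x * g y ≤ m (fun i => (x i + y i) / 2) ^ 2) :
    (∫⁻ x, f x) * ∫⁻ x, g x ≤ (∫⁻ x, m x) ^ 2 := by
  have e := volume_measurePreserving_piCongrLeft (fun _ : ι => ℝ) (Fintype.equivFin ι).symm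
  rw [← e.lintegral_comp hf, ← e.lintegral_comp hg, ← e.lintegral_comp hm]
  have hE := e.measurable
  refine prekopa_leindler_fin _ (hf.comp hE) (hg.comp hE) (hm.comp hE) fun x y => ?_
  refine (h _ _).trans (le_of_eq ?_)
  congr 2
  ext i
  obtain ⟨j, rfl⟩ := (Fintype.equivFin ι).symm.surjective i
  simp only [MeasurableEquiv.piCongrLeft_apply_apply]


/-! ### Moment generating functions of finite weighted sums -/

/-- Equivalent to `sinh (x / 2) ^ 2 ≥ (x / 2) ^ 2`. -/
lemma exp_add_exp_neg_ge (x : ℝ) : 2 + x ^ 2 ≤ Real.exp x + Real.exp (-x) := by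
  wlog hx : 0 ≤ x generalizing x
  · have := this (-x) (by linarith)
    rwa [neg_neg, neg_sq, add_comm (Real.exp _)] at this
  have h1 : x / 2 ≤ Real.sinh (x / 2) := Real.self_le_sinh_iff.2 (by linarith)
  rw [Real.sinh_eq] at h1
  have h2 : Real.exp x = Real.exp (x / 2) ^ 2 := by
    rw [← Real.exp_nat_mul]; congr 1; push_cast; ring
  have h3 : Real.exp (-x) = Real.exp (-(x / 2)) ^ 2 := by
    rw [← Real.exp_nat_mul]; congr 1; push_cast; ring
  have h4 : Real.exp (x / 2) * Real.exp (-(x / 2)) = 1 := by rw [← Real.exp_add]; simp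
  rw [h2, h3]
  nlinarith

/-- If `E[exp (t X)] E[exp (-t X)] ≤ exp (t² c)` for all `t`, then `Var X ≤ c`. With `X'` an independent
copy of `X`, the left side is `E[cosh (t (X - X'))] ≥ 1 + t² Var X`. The weights `w` are not
normalized. -/
lemma var_le_of_mgf {ι : Type*} [Fintype ι] [Nonempty ι] (w a : ι → ℝ) (hw : ∀ i, 0 < w i) (c : ℝ)
    (h : ∀ t : ℝ, (∑ i, w i * Real.exp (t * a i)) * (∑ i, w i * Real.exp (-t * a i)) ≤
      (∑ i, w i) ^ 2 * Real.exp (t ^ 2 * c)) :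
    (∑ i, w i) * (∑ i, w i * a i ^ 2) - (∑ i, w i * a i) ^ 2 ≤ (∑ i, w i) ^ 2 * c := by
  set S := ∑ i, w i with hS
  set A := ∑ i, w i * a i with hA
  set B := ∑ i, w i * a i ^ 2 with hB
  have low : ∀ t : ℝ, S ^ 2 + t ^ 2 * (S * B - A ^ 2) ≤ S ^ 2 * Real.exp (t ^ 2 * c) := by
    intro t
    refine le_trans ?_ (h t)
    have e1 : 2 * ((∑ i, w i * Real.exp (t * a i)) * (∑ i, w i * Real.exp (-t * a i))) =
        ∑ i, ∑ j, w i * w j * (Real.exp (t * (a i - a j)) + Real.exp (-(t * (a i - a j)))) := by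
      rw [two_mul]
      nth_rewrite 2 [mul_comm]
      simp only [sum_mul_sum, ← sum_add_distrib]
      refine sum_congr rfl fun i _ => sum_congr rfl fun j _ => ?_
      rw [show t * (a i - a j) = t * a i + -t * a j by ring,
        show -(t * a i + -t * a j) = -t * a i + t * a j by ring, Real.exp_add, Real.exp_add]
      ring
    have e2 : 2 * (S ^ 2 + t ^ 2 * (S * B - A ^ 2)) =
        ∑ i, ∑ j, w i * w j * (2 + (t * (a i - a j)) ^ 2) := by
      have e3 : ∀ i j, w i * w j * (2 + (t * (a i - a j)) ^ 2) = 2 * (w i * w j) +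
          t ^ 2 * ((w i * a i ^ 2) * w j + w i * (w j * a j ^ 2) -
            2 * ((w i * a i) * (w j * a j))) := fun i j => by ring
      simp only [e3, sum_add_distrib, sum_sub_distrib, ← mul_sum, ← sum_mul]
      rw [← hS, ← hA, ← hB]
      ring
    have : 2 * (S ^ 2 + t ^ 2 * (S * B - A ^ 2)) ≤
        2 * ((∑ i, w i * Real.exp (t * a i)) * (∑ i, w i * Real.exp (-t * a i))) := by
      rw [e1, e2]
      refine sum_le_sum fun i _ => sum_le_sum fun j _ => ?_
      exact mul_le_mul_of_nonneg_left (exp_add_exp_neg_ge _) (mul_pos (hw i) (hw j)).le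
    linarith
  have hd : HasDerivAt (fun r : ℝ => S ^ 2 * Real.exp (r * c)) (S ^ 2 * c) 0 := by
    have := (((hasDerivAt_id (0:ℝ)).mul_const c).exp).const_mul (S ^ 2)
    simpa using this
  -- Put `r = t²` in `low`, divide by `r`, and let `r` decrease to `0`.
  have hlim := hd.tendsto_slope_zero_right
  refine ge_of_tendsto hlim ?_
  filter_upwards [self_mem_nhdsWithin] with r hr
  have hr : 0 < r := hr
  have := low (Real.sqrt r)
  rw [Real.sq_sqrt hr.le] at this
  simp only [zero_add, zero_mul, Real.exp_zero, mul_one, smul_eq_mul]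
  rw [inv_mul_eq_div, le_div_iff₀ hr]
  linarith

/-- If `X` has variance at most `c` under every exponential tilt of its law, then
`E[exp X] E[exp (-X)] ≤ exp c`: the second derivative of the log-moment generating function is the
variance of the tilted law, so subtracting `c t² / 2` leaves a concave function. -/
lemma mgf_le_of_var {ι : Type*} [Fintype ι] [Nonempty ι] (w a : ι → ℝ) (hw : ∀ i, 0 < w i) (c : ℝ)
    (h : ∀ t : ℝ, (∑ i, w i * Real.exp (t * a i) * a i ^ 2) / (∑ i, w i * Real.exp (t * a i)) -
      ((∑ i, w i * Real.exp (t * a i) * a i) / (∑ i, w i * Real.exp (t * a i))) ^ 2 ≤ c) :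
    (∑ i, w i * Real.exp (a i)) * (∑ i, w i * Real.exp (-a i)) ≤
      (∑ i, w i) ^ 2 * Real.exp c := by
  set S : ℝ → ℝ := fun t => ∑ i, w i * Real.exp (t * a i) with hS
  set A : ℝ → ℝ := fun t => ∑ i, w i * Real.exp (t * a i) * a i with hA
  set B : ℝ → ℝ := fun t => ∑ i, w i * Real.exp (t * a i) * a i ^ 2 with hB
  have hSpos : ∀ t, 0 < S t := fun t =>
    sum_pos (fun i _ => mul_pos (hw i) (Real.exp_pos _)) univ_nonempty
  have hdS : ∀ t, HasDerivAt S (A t) t := by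
    intro t
    refine HasDerivAt.fun_sum fun i _ => ?_
    have := (((hasDerivAt_id t).mul_const (a i)).exp).const_mul (w i)
    simpa [mul_assoc] using this
  have hdA : ∀ t, HasDerivAt A (B t) t := by
    intro t
    refine HasDerivAt.fun_sum fun i _ => ?_
    have := ((((hasDerivAt_id t).mul_const (a i)).exp).const_mul (w i)).mul_const (a i)
    simpa [mul_assoc, sq] using this
  set φ : ℝ → ℝ := fun t => Real.log (S t) - c / 2 * t ^ 2 with hφ
  have hd1 : ∀ t, HasDerivAt φ (A t / S t - c * t) t := by
    intro t
    have := ((hdS t).log (hSpos t).ne').sub (((hasDerivAt_id t).pow 2).const_mul (c / 2))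
    refine this.congr_deriv ?_
    simp only [id]
    ring
  have hd2 : ∀ t, HasDerivAt (fun t => A t / S t - c * t)
      (B t / S t - (A t / S t) ^ 2 - c) t := by
    intro t
    have := ((hdA t).div (hdS t) (hSpos t).ne').sub ((hasDerivAt_id t).const_mul c)
    refine this.congr_deriv ?_
    have := (hSpos t).ne'
    field_simp
  have hder : deriv φ = fun t => A t / S t - c * t := funext fun t => (hd1 t).deriv
  have hconc : ConcaveOn ℝ Set.univ φ := by
    refine concaveOn_of_deriv2_nonpos convex_univ
      (fun t _ => (hd1 t).continuousAt.continuousWithinAt)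
      (fun t _ => (hd1 t).differentiableAt.differentiableWithinAt) ?_ ?_
    · rw [hder]; exact fun t _ => (hd2 t).differentiableAt.differentiableWithinAt
    · intro t _
      rw [Function.iterate_succ, Function.iterate_one, Function.comp_apply, hder, (hd2 t).deriv]
      have := h t
      linarith
  have hmid := hconc.2 (Set.mem_univ (1:ℝ)) (Set.mem_univ (-1:ℝ))
    (by norm_num : (0:ℝ) ≤ 1/2) (by norm_num : (0:ℝ) ≤ 1/2) (by norm_num)
  simp only [hφ, smul_eq_mul] at hmid
  norm_num at hmid
  have e1 : ∑ i, w i * Real.exp (a i) = S 1 := by simp [hS]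
  have e2 : ∑ i, w i * Real.exp (-a i) = S (-1) := by simp [hS]
  have e3 : ∑ i, w i = S 0 := by simp [hS]
  rw [e1, e2, e3, ← Real.log_le_log_iff (mul_pos (hSpos _) (hSpos _))
    (mul_pos (pow_pos (hSpos _) 2) (Real.exp_pos _)), Real.log_mul (hSpos _).ne' (hSpos _).ne',
    Real.log_mul (pow_pos (hSpos _) 2).ne' (Real.exp_pos _).ne', Real.log_exp, Real.log_pow]
  push_cast
  linarith

/-! ### Gibbs weights and covariances -/

lemma gibbsWeight_pos {V : Type*} [Fintype V] (J : Matrix V V ℝ) (β : ℝ) (h : V → ℝ) (s : V → Bool) :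
    0 < gibbsWeight J β h s := Real.exp_pos _

lemma gibbsZ_pos {V : Type*} [Fintype V] [DecidableEq V]
    (J : Matrix V V ℝ) (β : ℝ) (h : V → ℝ) : 0 < gibbsZ J β h :=
  sum_pos (fun s _ => gibbsWeight_pos J β h s) univ_nonempty

lemma gibbsWeight_eq {V : Type*} [Fintype V] (J : Matrix V V ℝ) (β : ℝ) (h : V → ℝ) (s : V → Bool) :
    gibbsWeight J β h s = Real.exp (β / 2 * (spin s ⬝ᵥ J *ᵥ spin s) + h ⬝ᵥ spin s) := by
  simp only [gibbsWeight, dotProduct, mulVec, mul_sum, mul_assoc]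

lemma gibbsWeight_add {V : Type*} [Fintype V] (J : Matrix V V ℝ) (β : ℝ) (h y : V → ℝ) (s : V → Bool) :
    gibbsWeight J β (h + y) s = gibbsWeight J β h s * Real.exp (y ⬝ᵥ spin s) := by
  rw [gibbsWeight_eq, gibbsWeight_eq, ← Real.exp_add, add_dotProduct, add_assoc]

/-- The quadratic form of the covariance matrix is the variance of the linear statistic
`a ⬝ᵥ spin s`. -/
lemma dotProduct_gibbsCov {V : Type*} [Fintype V] [DecidableEq V]
    (J : Matrix V V ℝ) (β : ℝ) (h a : V → ℝ) :
    a ⬝ᵥ gibbsCov J β h *ᵥ a =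
      (∑ s, gibbsWeight J β h s * (a ⬝ᵥ spin s) ^ 2) / gibbsZ J β h -
      ((∑ s, gibbsWeight J β h s * (a ⬝ᵥ spin s)) / gibbsZ J β h) ^ 2 := by
  have e1 : ∀ s : V → Bool, (a ⬝ᵥ spin s) ^ 2 = ∑ u, ∑ v, a u * a v * (spin s u * spin s v) := by
    intro s
    rw [sq, dotProduct, sum_mul_sum]
    exact sum_congr rfl fun u _ => sum_congr rfl fun v _ => by ring
  have e2 : (∑ s, gibbsWeight J β h s * (a ⬝ᵥ spin s) ^ 2) / gibbsZ J β h =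
      ∑ u, ∑ v, a u * a v * gibbsExp J β h (fun s => spin s u * spin s v) := by
    simp only [e1, gibbsExp, gibbsProb, sum_div, mul_sum]
    rw [sum_comm]
    refine sum_congr rfl fun u _ => ?_
    rw [sum_comm]
    exact sum_congr rfl fun v _ => sum_congr rfl fun s _ => by ring
  have e3 : (∑ s, gibbsWeight J β h s * (a ⬝ᵥ spin s)) / gibbsZ J β h =
      ∑ u, a u * gibbsExp J β h (fun s => spin s u) := by
    simp only [dotProduct, gibbsExp, gibbsProb, sum_div, mul_sum]
    rw [sum_comm]
    exact sum_congr rfl fun v _ => sum_congr rfl fun s _ => by ring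
  rw [e2, e3, sq, sum_mul_sum, ← sum_sub_distrib]
  simp only [dotProduct, mulVec, gibbsCov, of_apply, mul_sum, ← sum_sub_distrib]
  exact sum_congr rfl fun u _ => sum_congr rfl fun v _ => by ring

/-- A bound on the covariance form in direction `a`, along the line of fields `y + t • a`, bounds the
second difference of `log Z` with step `a`. -/
lemma gibbsZ_mul_le {V : Type*} [Fintype V] [DecidableEq V]
    (J : Matrix V V ℝ) (β : ℝ) (y a : V → ℝ) (c : ℝ)
    (h : ∀ t : ℝ, a ⬝ᵥ gibbsCov J β (y + t • a) *ᵥ a ≤ c) :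
    gibbsZ J β (y + a) * gibbsZ J β (y - a) ≤ gibbsZ J β y ^ 2 * Real.exp c := by
  have := mgf_le_of_var (fun s => gibbsWeight J β y s) (fun s => a ⬝ᵥ spin s)
    (gibbsWeight_pos J β y) c (fun t => by
      have := h t
      rw [dotProduct_gibbsCov] at this
      simpa only [gibbsZ, gibbsWeight_add, smul_dotProduct, smul_eq_mul] using this)
  simpa only [gibbsZ, gibbsWeight_add, sub_eq_add_neg, neg_dotProduct] using this

/-- Second differences of `log Z` at small scale control the covariance form. -/
lemma dotProduct_gibbsCov_le {V : Type*} [Fintype V] [DecidableEq V]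
    (J : Matrix V V ℝ) (β : ℝ) (y a : V → ℝ) (c : ℝ)
    (h : ∀ t : ℝ, gibbsZ J β (y + t • a) * gibbsZ J β (y - t • a) ≤
      gibbsZ J β y ^ 2 * Real.exp (t ^ 2 * c)) :
    a ⬝ᵥ gibbsCov J β y *ᵥ a ≤ c := by
  have := var_le_of_mgf (fun s => gibbsWeight J β y s) (fun s => a ⬝ᵥ spin s)
    (gibbsWeight_pos J β y) c (fun t => by
      simpa only [gibbsZ, gibbsWeight_add, sub_eq_add_neg, neg_dotProduct, smul_dotProduct,
        smul_eq_mul, neg_mul] using h t)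
  rw [dotProduct_gibbsCov]
  have hZ := gibbsZ_pos J β y
  rw [← gibbsZ] at this
  rw [div_pow, div_sub_div _ _ hZ.ne' (pow_pos hZ 2).ne', div_le_iff₀ (by positivity)]
  nlinarith

/-! ### The Hubbard–Stratonovich identity -/

lemma dotProduct_mulVec_comm_of_isSymm {V : Type*} [Fintype V] {K : Matrix V V ℝ}
    (hK : K.IsSymm) (x y : V → ℝ) :
    x ⬝ᵥ K *ᵥ y = y ⬝ᵥ K *ᵥ x := by
  rw [dotProduct_mulVec, ← mulVec_transpose, hK.eq, dotProduct_comm]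

lemma lintegral_gaussian_ne_top {V : Type*} [Fintype V] {K : Matrix V V ℝ} (hK : K.PosDef) :
    ∫⁻ z : V → ℝ, ENNReal.ofReal (Real.exp (-(1 / 2 * (z ⬝ᵥ K *ᵥ z)))) ≠ ⊤ := by
  have hcont : Continuous fun z : V → ℝ => z ⬝ᵥ K *ᵥ z := by
    simp only [dotProduct, mulVec]; fun_prop
  -- `ε` is the minimum of the form on the unit sphere, which is empty when `V` is.
  obtain ⟨ε, hε, hq⟩ : ∃ ε : ℝ, 0 < ε ∧ ∀ z : V → ℝ, ε * ‖z‖ ^ 2 ≤ z ⬝ᵥ K *ᵥ z := by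
    rcases (Metric.sphere (0 : V → ℝ) 1).eq_empty_or_nonempty with he | hne
    · refine ⟨1, one_pos, fun z => ?_⟩
      have hz : z = 0 := by
        by_contra hz
        have : (‖z‖⁻¹ • z) ∈ Metric.sphere (0 : V → ℝ) 1 := by
          simp [norm_smul, inv_mul_cancel₀ (norm_ne_zero_iff.2 hz)]
        rw [he] at this
        exact this
      simp [hz]
    · obtain ⟨z0, hz0, hmin⟩ := (isCompact_sphere (0 : V → ℝ) 1).exists_isMinOn hne
        hcont.continuousOn
      refine ⟨z0 ⬝ᵥ K *ᵥ z0, ?_, fun z => ?_⟩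
      · have : z0 ≠ 0 := by rintro rfl; simp at hz0
        simpa using hK.dotProduct_mulVec_pos this
      · rcases eq_or_ne z 0 with rfl | hz
        · simp
        have hz' := norm_ne_zero_iff.2 hz
        have : (‖z‖⁻¹ • z) ∈ Metric.sphere (0 : V → ℝ) 1 := by
          simp [norm_smul, inv_mul_cancel₀ hz']
        have h1 := isMinOn_iff.1 hmin _ this
        rw [mulVec_smul, smul_dotProduct, dotProduct_smul, smul_eq_mul, smul_eq_mul] at h1
        calc _ ≤ (‖z‖⁻¹ * (‖z‖⁻¹ * (z ⬝ᵥ K *ᵥ z))) * ‖z‖ ^ 2 := by gcongr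
          _ = _ := by field_simp
  -- The sup norm dominates the Euclidean norm up to a constant; the integrand then factorizes.
  obtain ⟨δ, hδ, hq'⟩ : ∃ δ : ℝ, 0 < δ ∧ ∀ z : V → ℝ, δ * ∑ i, z i ^ 2 ≤ z ⬝ᵥ K *ᵥ z := by
    refine ⟨ε / (Fintype.card V + 1), by positivity, fun z => le_trans ?_ (hq z)⟩
    have : ∑ i, z i ^ 2 ≤ (Fintype.card V + 1) * ‖z‖ ^ 2 := by
      calc _ ≤ ∑ i : V, ‖z‖ ^ 2 := sum_le_sum fun i _ => by
            rw [← sq_abs]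
            exact pow_le_pow_left₀ (abs_nonneg _) (norm_le_pi_norm z i) 2
        _ = Fintype.card V * ‖z‖ ^ 2 := by simp
        _ ≤ _ := by nlinarith [sq_nonneg ‖z‖]
    rw [div_mul_eq_mul_div, div_le_iff₀ (by positivity)]
    nlinarith
  have hint : Integrable (fun z : V → ℝ => ∏ i, Real.exp (-(δ / 2) * z i ^ 2)) :=
    Integrable.fintype_prod (f := fun _ t => Real.exp (-(δ / 2) * t ^ 2))
      fun i => integrable_exp_neg_mul_sq (by positivity)
  refine ne_top_of_le_ne_top hint.lintegral_lt_top.ne (lintegral_mono fun z => ?_)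
  refine ENNReal.ofReal_le_ofReal ?_
  rw [← Real.exp_sum, ← mul_sum]
  refine Real.exp_le_exp.2 ?_
  have := hq' z
  linarith

lemma lintegral_gaussian_ne_zero {V : Type*} [Fintype V] (K : Matrix V V ℝ) :
    ∫⁻ z : V → ℝ, ENNReal.ofReal (Real.exp (-(1 / 2 * (z ⬝ᵥ K *ᵥ z)))) ≠ 0 := by
  have hcont : Continuous fun z : V → ℝ => z ⬝ᵥ K *ᵥ z := by
    simp only [dotProduct, mulVec]; fun_prop
  rw [Ne, lintegral_eq_zero_iff (by fun_prop)]
  intro h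
  have h2 : ∀ᵐ z : V → ℝ, False := by
    filter_upwards [h] with z hz
    simp only [Pi.zero_apply, ENNReal.ofReal_eq_zero] at hz
    exact absurd (Real.exp_pos _) (not_lt.2 hz)
  have h3 := isOpen_univ.measure_ne_zero (volume : Measure (V → ℝ)) Set.univ_nonempty
  simp only [Filter.eventually_false_iff_eq_bot, ae_eq_bot] at h2
  simp [h2] at h3

/-- Completing the square: `zᵀKσ - ½ zᵀKz = ½ σᵀKσ - ½ (z - σ)ᵀK(z - σ)` with `K = β • M₁`. -/
lemma hubbard_stratonovich_pointwise {V : Type*} [Fintype V] [DecidableEq V]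
    {M₁ : Matrix V V ℝ} (hs : M₁.IsSymm) (M₂ : Matrix V V ℝ) (β : ℝ)
    (h z : V → ℝ) :
    Real.exp (-(1 / 2 * (z ⬝ᵥ (β • M₁) *ᵥ z))) * gibbsZ M₂ β ((β • M₁) *ᵥ z + h) =
      ∑ s, gibbsWeight (M₁ + M₂) β h s *
        Real.exp (-(1 / 2 * ((z - spin s) ⬝ᵥ (β • M₁) *ᵥ (z - spin s)))) := by
  rw [gibbsZ, mul_sum]
  refine sum_congr rfl fun s _ => ?_
  rw [gibbsWeight_eq, gibbsWeight_eq, ← Real.exp_add, ← Real.exp_add]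
  congr 1
  have := dotProduct_mulVec_comm_of_isSymm hs z (spin s)
  simp only [smul_mulVec, add_mulVec, mulVec_sub, add_dotProduct, sub_dotProduct, dotProduct_add,
    dotProduct_sub, smul_dotProduct, dotProduct_smul, smul_eq_mul, dotProduct_comm (M₁ *ᵥ z)]
  rw [this]
  ring

/-- The Gaussian integral on the right does not depend on `h`: each term of
`hubbard_stratonovich_pointwise` is a translate of the same Gaussian. -/
lemma hubbard_stratonovich_lintegral {V : Type*} [Fintype V] [DecidableEq V]
    {M₁ : Matrix V V ℝ} (hs : M₁.IsSymm) (M₂ : Matrix V V ℝ) (β : ℝ)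
    (h : V → ℝ) :
    ∫⁻ z : V → ℝ, ENNReal.ofReal (Real.exp (-(1 / 2 * (z ⬝ᵥ (β • M₁) *ᵥ z))) *
        gibbsZ M₂ β ((β • M₁) *ᵥ z + h)) =
      ENNReal.ofReal (gibbsZ (M₁ + M₂) β h) *
        ∫⁻ z : V → ℝ, ENNReal.ofReal (Real.exp (-(1 / 2 * (z ⬝ᵥ (β • M₁) *ᵥ z)))) := by
  have hcont : Continuous fun z : V → ℝ => z ⬝ᵥ (β • M₁) *ᵥ z := by
    simp only [dotProduct, mulVec]; fun_prop
  have hmeas : Measurable fun z : V → ℝ =>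
    ENNReal.ofReal (Real.exp (-(1 / 2 * (z ⬝ᵥ (β • M₁) *ᵥ z)))) := by fun_prop
  have hmeas' : ∀ s : V → Bool, Measurable fun z : V → ℝ => ENNReal.ofReal
      (Real.exp (-(1 / 2 * ((z - spin s) ⬝ᵥ (β • M₁) *ᵥ (z - spin s))))) := fun s =>
    hmeas.comp (measurable_id.sub_const (spin s))
  simp only [hubbard_stratonovich_pointwise hs]
  have e : ∀ z : V → ℝ, ENNReal.ofReal (∑ s, gibbsWeight (M₁ + M₂) β h s *
        Real.exp (-(1 / 2 * ((z - spin s) ⬝ᵥ (β • M₁) *ᵥ (z - spin s))))) =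
      ∑ s, ENNReal.ofReal (gibbsWeight (M₁ + M₂) β h s) * ENNReal.ofReal
        (Real.exp (-(1 / 2 * ((z - spin s) ⬝ᵥ (β • M₁) *ᵥ (z - spin s))))) := by
    intro z
    rw [ENNReal.ofReal_sum_of_nonneg fun s _ =>
      (mul_pos (gibbsWeight_pos _ _ _ s) (Real.exp_pos _)).le]
    exact sum_congr rfl fun s _ => ENNReal.ofReal_mul (gibbsWeight_pos _ _ _ s).le
  simp only [e]
  rw [lintegral_finsetSum _ fun s _ => (hmeas' s).const_mul _]
  rw [gibbsZ, ENNReal.ofReal_sum_of_nonneg fun s _ => (gibbsWeight_pos _ _ _ s).le, sum_mul]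
  refine sum_congr rfl fun s _ => ?_
  rw [lintegral_const_mul _ (hmeas' s)]
  congr 1
  exact lintegral_sub_right_eq_self (fun z : V → ℝ =>
    ENNReal.ofReal (Real.exp (-(1 / 2 * (z ⬝ᵥ (β • M₁) *ᵥ z))))) (spin s)

/-! ### The covariance bound -/

/-- The covariance hypothesis in integrated form, at the field `K *ᵥ z + h` with step `K *ᵥ e`,
`K = β • M₁`. -/
lemma gibbsZ_shift_mul_le {V : Type*} [Fintype V] [DecidableEq V]
    (M₁ M₂ : Matrix V V ℝ) (hM₁symm : M₁.IsSymm) (β : ℝ) (h : V → ℝ) (Γ : Matrix V V ℝ)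
    (hyp : ∀ z : V → ℝ,
      ((β • M₁) - (β • M₁) * gibbsCov M₂ β (M₁.mulVec z + h) * (β • M₁) - Γ).PosSemidef)
    (z e : V → ℝ) :
    gibbsZ M₂ β ((β • M₁) *ᵥ z + h + (β • M₁) *ᵥ e) *
        gibbsZ M₂ β ((β • M₁) *ᵥ z + h - (β • M₁) *ᵥ e) ≤
      gibbsZ M₂ β ((β • M₁) *ᵥ z + h) ^ 2 *
        Real.exp (e ⬝ᵥ (β • M₁) *ᵥ e - e ⬝ᵥ Γ *ᵥ e) := by
  refine gibbsZ_mul_le M₂ β _ _ _ fun t => ?_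
  have hK : (β • M₁).IsSymm := hM₁symm.smul β
  have h1 := (hyp (β • (z + t • e))).dotProduct_mulVec_nonneg e
  have h2 : M₁ *ᵥ (β • (z + t • e)) + h = (β • M₁) *ᵥ z + h + t • ((β • M₁) *ᵥ e) := by
    simp only [mulVec_smul, mulVec_add, smul_mulVec, smul_add]
    rw [smul_comm t β]
    abel
  rw [h2, star_trivial, sub_mulVec, sub_mulVec, dotProduct_sub, dotProduct_sub, ← mulVec_mulVec,
    ← mulVec_mulVec, dotProduct_mulVec_comm_of_isSymm hK e (_ *ᵥ _),
    dotProduct_comm (gibbsCov _ _ _ *ᵥ _)] at h1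
  linarith

/-- The upper bound by `Γ⁻¹` for second differences of `log Z_{M₁+M₂}`, obtained by applying
Prékopa–Leindler to the integrands of the Hubbard–Stratonovich formula at `h + v`, `h - v` and `h`. -/
lemma gibbsZ_add_mul_le {V : Type*} [Fintype V] [DecidableEq V]
    (M₁ M₂ : Matrix V V ℝ) (hM₁symm : M₁.IsSymm) (hM₁ : M₁.PosDef) (β : ℝ) (hβ : 0 < β)
    (h : V → ℝ) (Γ : Matrix V V ℝ) (hΓsymm : Γ.IsSymm) (hΓ : Γ.PosDef)
    (hyp : ∀ z : V → ℝ,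
      ((β • M₁) - (β • M₁) * gibbsCov M₂ β (M₁.mulVec z + h) * (β • M₁) - Γ).PosSemidef)
    (v : V → ℝ) :
    gibbsZ (M₁ + M₂) β (h + v) * gibbsZ (M₁ + M₂) β (h - v) ≤
      gibbsZ (M₁ + M₂) β h ^ 2 * Real.exp (v ⬝ᵥ Γ⁻¹ *ᵥ v) := by
  set K := β • M₁ with hKdef
  have hK : K.IsSymm := hM₁symm.smul β
  have hKpos : K.PosDef := hM₁.smul hβ
  set c := v ⬝ᵥ Γ⁻¹ *ᵥ v with hc
  obtain ⟨k, hk⟩ : ∃ k, K *ᵥ k = v := ⟨K⁻¹ *ᵥ v, by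
    rw [mulVec_mulVec, mul_nonsing_inv _ ((isUnit_iff_isUnit_det _).1 hKpos.isUnit), one_mulVec]⟩
  obtain ⟨g, hg⟩ : ∃ g, Γ *ᵥ g = v ∧ g = Γ⁻¹ *ᵥ v := ⟨Γ⁻¹ *ᵥ v, by
    rw [mulVec_mulVec, mul_nonsing_inv _ ((isUnit_iff_isUnit_det _).1 hΓ.isUnit), one_mulVec], rfl⟩
  set F : (V → ℝ) → (V → ℝ) → ℝ := fun θ z =>
    Real.exp (-(1 / 2 * (z ⬝ᵥ K *ᵥ z))) * gibbsZ M₂ β (K *ᵥ z + (h + θ)) with hF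
  have hFpos : ∀ θ z, 0 < F θ z := fun θ z => mul_pos (Real.exp_pos _) (gibbsZ_pos _ _ _)
  have hFmeas : ∀ θ, Measurable (F θ) := by
    intro θ
    have h1 : Continuous fun z : V → ℝ => z ⬝ᵥ K *ᵥ z := by
      simp only [dotProduct, mulVec]; fun_prop
    have h2 : Continuous fun z : V → ℝ => gibbsZ M₂ β (K *ᵥ z + (h + θ)) := by
      simp only [gibbsZ, gibbsWeight, mulVec, Pi.add_apply, dotProduct]; fun_prop
    exact Continuous.measurable (by fun_prop)
  have hpt : ∀ x y, F v x * F (-v) y ≤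
      (Real.exp (c / 2) * F 0 (fun i => (x i + y i) / 2)) ^ 2 := by
    intro x y
    obtain ⟨m, d, rfl, rfl⟩ : ∃ m d : V → ℝ, x = m + d ∧ y = m - d :=
      ⟨(1 / 2 : ℝ) • (x + y), (1 / 2 : ℝ) • (x - y), by ext; simp; ring, by ext; simp; ring⟩
    have hm : (fun i => ((m + d) i + (m - d) i) / 2) = m := by ext; simp
    rw [hm]
    have key := gibbsZ_shift_mul_le M₁ M₂ hM₁symm β h Γ hyp m (d + k)
    rw [← hKdef] at key
    have e1 : K *ᵥ (m + d) + (h + v) = K *ᵥ m + h + K *ᵥ (d + k) := by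
      rw [mulVec_add, mulVec_add, hk]; abel
    have e2 : K *ᵥ (m - d) + (h + -v) = K *ᵥ m + h - K *ᵥ (d + k) := by
      rw [mulVec_sub, mulVec_add, hk]; abel
    simp only [hF, e1, e2, add_zero]
    set P := gibbsZ M₂ β (K *ᵥ m + h) ^ 2
    have hP : 0 ≤ P := sq_nonneg _
    -- The excess of the right side is `kᵀKk + (d + k - g)ᵀ Γ (d + k - g)`, with `g = Γ⁻¹ v`.
    have hexp : -(1 / 2 * ((m + d) ⬝ᵥ K *ᵥ (m + d))) + -(1 / 2 * ((m - d) ⬝ᵥ K *ᵥ (m - d))) +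
        ((d + k) ⬝ᵥ K *ᵥ (d + k) - (d + k) ⬝ᵥ Γ *ᵥ (d + k)) ≤
        c + -(m ⬝ᵥ K *ᵥ m) := by
      have hsq := hΓ.posSemidef.dotProduct_mulVec_nonneg (d + k - g)
      have hkk := hKpos.posSemidef.dotProduct_mulVec_nonneg k
      rw [star_trivial] at hsq hkk
      rw [mulVec_sub, dotProduct_sub, sub_dotProduct, sub_dotProduct, hg.1,
        dotProduct_mulVec_comm_of_isSymm hΓsymm g, hg.1] at hsq
      have hgv : g ⬝ᵥ v = c := by rw [hc, ← hg.2, dotProduct_comm]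
      have hmd := dotProduct_mulVec_comm_of_isSymm hK m d
      have hkd := dotProduct_mulVec_comm_of_isSymm hK k d
      rw [hk] at hkd hkk
      simp only [mulVec_add, mulVec_sub, add_dotProduct, sub_dotProduct, dotProduct_add,
        dotProduct_sub, hk] at hsq ⊢
      linarith
    calc _ = Real.exp (-(1 / 2 * ((m + d) ⬝ᵥ K *ᵥ (m + d))) +
            -(1 / 2 * ((m - d) ⬝ᵥ K *ᵥ (m - d)))) *
          (gibbsZ M₂ β (K *ᵥ m + h + K *ᵥ (d + k)) *
            gibbsZ M₂ β (K *ᵥ m + h - K *ᵥ (d + k))) := by rw [Real.exp_add]; ring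
      _ ≤ Real.exp (-(1 / 2 * ((m + d) ⬝ᵥ K *ᵥ (m + d))) +
            -(1 / 2 * ((m - d) ⬝ᵥ K *ᵥ (m - d)))) *
          (P * Real.exp ((d + k) ⬝ᵥ K *ᵥ (d + k) - (d + k) ⬝ᵥ Γ *ᵥ (d + k))) := by gcongr
      _ = P * Real.exp (-(1 / 2 * ((m + d) ⬝ᵥ K *ᵥ (m + d))) +
            -(1 / 2 * ((m - d) ⬝ᵥ K *ᵥ (m - d))) +
            ((d + k) ⬝ᵥ K *ᵥ (d + k) - (d + k) ⬝ᵥ Γ *ᵥ (d + k))) := by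
          rw [Real.exp_add _ (_ - _)]; ring
      _ ≤ P * Real.exp (c + -(m ⬝ᵥ K *ᵥ m)) := by gcongr
      _ = _ := by
          rw [mul_pow, mul_pow, ← Real.exp_nat_mul, ← Real.exp_nat_mul,
            show c + -(m ⬝ᵥ K *ᵥ m) = ((2 : ℕ) : ℝ) * (c / 2) +
              ((2 : ℕ) : ℝ) * -(1 / 2 * (m ⬝ᵥ K *ᵥ m)) by push_cast; ring, Real.exp_add]
          ring
  have hpl := prekopa_leindler_pi (f := fun z => ENNReal.ofReal (F v z))
    (g := fun z => ENNReal.ofReal (F (-v) z))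
    (m := fun z => ENNReal.ofReal (Real.exp (c / 2) * F 0 z)) (hFmeas _).ennreal_ofReal
    (hFmeas _).ennreal_ofReal ((hFmeas _).const_mul _).ennreal_ofReal fun x y => by
      rw [← ENNReal.ofReal_mul (hFpos _ _).le, ← ENNReal.ofReal_pow
        (mul_pos (Real.exp_pos _) (hFpos _ _)).le]
      exact ENNReal.ofReal_le_ofReal (hpt x y)
  simp only [ENNReal.ofReal_mul (Real.exp_pos (c / 2)).le] at hpl
  rw [lintegral_const_mul _ (hFmeas 0).ennreal_ofReal] at hpl
  simp only [hF] at hpl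
  rw [hubbard_stratonovich_lintegral hM₁symm, hubbard_stratonovich_lintegral hM₁symm,
    hubbard_stratonovich_lintegral hM₁symm, add_zero,
    ← sub_eq_add_neg] at hpl
  have hC0 := lintegral_gaussian_ne_zero K
  have hCt := lintegral_gaussian_ne_top hKpos
  rw [← hKdef] at hpl
  set C := ∫⁻ z : V → ℝ, ENNReal.ofReal (Real.exp (-(1 / 2 * (z ⬝ᵥ K *ᵥ z))))
  have hfin : C ^ 2 * ENNReal.ofReal (gibbsZ (M₁ + M₂) β (h + v) * gibbsZ (M₁ + M₂) β (h - v)) ≤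
      C ^ 2 * ENNReal.ofReal (gibbsZ (M₁ + M₂) β h ^ 2 * Real.exp c) := by
    rw [ENNReal.ofReal_mul (gibbsZ_pos _ _ _).le, ENNReal.ofReal_mul (sq_nonneg _),
      ENNReal.ofReal_pow (gibbsZ_pos _ _ _).le,
      show Real.exp c = Real.exp (c / 2) ^ 2 by rw [← Real.exp_nat_mul]; congr 1; push_cast; ring,
      ENNReal.ofReal_pow (Real.exp_pos _).le]
    calc _ = _ := by ring
      _ ≤ _ := hpl
      _ = _ := by ring
  rw [ENNReal.mul_le_mul_iff_right (pow_ne_zero 2 hC0) (ENNReal.pow_ne_top hCt)] at hfin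
  exact (ENNReal.ofReal_le_ofReal_iff
    (mul_nonneg (sq_nonneg _) (Real.exp_pos _).le)).1 hfin

/-- If `(β·M₁) − (β·M₁)·Cov(M₂,β,M₁z+h)·(β·M₁) ⪰ Γ` for every `z`, then
`Cov(M₁+M₂,β,h) ⪯ Γ⁻¹`. -/
theorem cov_le_inv_of_forall_field {V : Type*} [Fintype V] [DecidableEq V] [Nonempty V]
    (M₁ M₂ : Matrix V V ℝ) (hM₁symm : M₁.IsSymm) (hM₂symm : M₂.IsSymm)
    (hM₁ : M₁.PosDef) (β : ℝ) (hβ : 0 < β) (h : V → ℝ)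
    (Γ : Matrix V V ℝ) (hΓsymm : Γ.IsSymm) (hΓ : Γ.PosDef)
    (hyp : ∀ z : V → ℝ,
      ((β • M₁) - (β • M₁) * gibbsCov M₂ β (M₁.mulVec z + h) * (β • M₁) - Γ).PosSemidef) :
    (Γ⁻¹ - gibbsCov (M₁ + M₂) β h).PosSemidef := by
  have hcov : (gibbsCov (M₁ + M₂) β h).IsHermitian := by
    ext u v
    simp only [conjTranspose_apply, gibbsCov, of_apply, star_trivial]
    rw [mul_comm]
    simp only [mul_comm (spin _ u)]
  refine PosSemidef.of_dotProduct_mulVec_nonneg (hΓ.inv.isHermitian.sub hcov) fun v => ?_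
  rw [star_trivial, sub_mulVec, dotProduct_sub, sub_nonneg]
  refine dotProduct_gibbsCov_le _ _ _ _ _ fun t => ?_
  have := gibbsZ_add_mul_le M₁ M₂ hM₁symm hM₁ β hβ h Γ hΓsymm hΓ hyp (t • v)
  rwa [mulVec_smul, smul_dotProduct, dotProduct_smul, smul_eq_mul, smul_eq_mul, ← mul_assoc,
    ← sq] at this
end

section
/- Let V be a finite nonempty type, J : Matrix V V ℝ symmetric, and β > 0, and consider the 2-spin Gibbs distribution μ = μ_{J,β,0} with zero external field. Then for all u, v ∈ V: (i) E[σ(u)σ(v)] − E[σ(u)]·E[σ(v)] = μ(σ(v)=1 ∣ σ(u)=1) − μ(σ(v)=1 ∣ σ(u)=−1); and (ii) μ(σ(u)=1 ∧ σ(v)=1) − μ(σ(u)=1)·μ(σ(v)=1) = (1/4)·(μ(σ(v)=1 ∣ σ(u)=1) − μ(σ(v)=1 ∣ σ(u)=−1)). Here the conditional probabilities are quotients of the corresponding probabilities, well-defined since every configuration has positive probability under μ. -/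
/-! At zero external field the Hamiltonian is quadratic in the spins, so the Gibbs measure is
invariant under the global flip `σ ↦ -σ` (`gibbsProb_flip`). Hence every spin has mean zero
(`gibbsExp_spin`), each value of a single spin has probability `1/2`, and expanding
`1[σ(u) = ε, σ(v) = 1] = (1 + ε σ(u)) (1 + σ(v)) / 4` with `c = E[σ(u) σ(v)]` gives joint
probability `(1 + ε c) / 4`. Both identities are then arithmetic: the influence is
`(1 + c) / 2 - (1 - c) / 2 = c` and the indicator covariance is `(1 + c) / 4 - 1 / 4 = c / 4`. -/

open Matrix Finset

/-- Probability of an event (given by a decidable predicate on configurations)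
under the 2-spin Gibbs distribution. -/
noncomputable def gibbsPr {V : Type*} [Fintype V] [DecidableEq V]
    (J : Matrix V V ℝ) (β : ℝ) (h : V → ℝ)
    (p : (V → Bool) → Prop) [DecidablePred p] : ℝ :=
  ∑ s ∈ Finset.univ.filter p, gibbsProb J β h s

section GibbsHelpers

variable {V : Type*} [Fintype V]

lemma spin_flip (s : V → Bool) (v : V) : spin (fun w => !s w) v = -spin s v := by
  cases h : s v <;> simp [spin, h]

variable [DecidableEq V] (J : Matrix V V ℝ) (β : ℝ)

lemma gibbsProb_flip (s : V → Bool) :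
    gibbsProb J β 0 (fun w => !s w) = gibbsProb J β 0 s := by
  simp [gibbsProb, gibbsWeight, spin_flip]

lemma sum_gibbsProb (h : V → ℝ) : ∑ s, gibbsProb J β h s = 1 := by
  have hZ : 0 < gibbsZ J β h := Finset.sum_pos (fun _ _ => Real.exp_pos _) univ_nonempty
  simp only [gibbsProb, ← Finset.sum_div]
  exact div_self hZ.ne'

/-- By flip symmetry, `E[σ(v)] = -E[σ(v)]`. -/
lemma gibbsExp_spin (v : V) : gibbsExp J β 0 (fun s => spin s v) = 0 := by
  have hinv : Function.Involutive (fun (s : V → Bool) w => !s w) := fun s => by simp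
  have key := Equiv.sum_comp hinv.toPerm (fun s => gibbsProb J β 0 s * spin s v)
  simp only [Function.Involutive.coe_toPerm, gibbsProb_flip, spin_flip, mul_neg,
    Finset.sum_neg_distrib] at key
  unfold gibbsExp
  linarith

lemma gibbsPr_single (u : V) (a : Bool) : gibbsPr J β 0 (fun s => s u = a) = 1 / 2 := by
  have expand : gibbsPr J β 0 (fun s => s u = a) = 1 / 2 * ∑ s, gibbsProb J β 0 s
      + (if a then 1 / 2 else -1 / 2) * gibbsExp J β 0 (fun s => spin s u) := by
    simp only [gibbsPr, gibbsExp, Finset.sum_filter, Finset.mul_sum, ← Finset.sum_add_distrib]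
    refine Finset.sum_congr rfl fun s _ => ?_
    cases a <;> cases hu : s u <;> simp [spin, hu] <;> ring
  rw [expand, sum_gibbsProb, gibbsExp_spin]
  ring

lemma gibbsPr_pair (u v : V) (a : Bool) :
    gibbsPr J β 0 (fun s => s u = a ∧ s v = true)
      = (1 + (if a then 1 else -1) * gibbsExp J β 0 (fun s => spin s u * spin s v)) / 4 := by
  have expand : gibbsPr J β 0 (fun s => s u = a ∧ s v = true) = 1 / 4 * ∑ s, gibbsProb J β 0 s
      + (if a then 1 / 4 else -1 / 4) * gibbsExp J β 0 (fun s => spin s u)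
      + 1 / 4 * gibbsExp J β 0 (fun s => spin s v)
      + (if a then 1 / 4 else -1 / 4) * gibbsExp J β 0 (fun s => spin s u * spin s v) := by
    simp only [gibbsPr, gibbsExp, Finset.sum_filter, Finset.mul_sum, ← Finset.sum_add_distrib]
    refine Finset.sum_congr rfl fun s _ => ?_
    cases a <;> cases hu : s u <;> cases hv : s v <;> simp [spin, hu, hv] <;> ring
  rw [expand, sum_gibbsProb, gibbsExp_spin, gibbsExp_spin]
  cases a <;> simp <;> ring

end GibbsHelpers

/-- With zero external field: (i) the covariance entry equals the influence
`μ(σ(v)=1 ∣ σ(u)=1) − μ(σ(v)=1 ∣ σ(u)=−1)`, and (ii) the covariance of the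
indicator events equals a quarter of that influence.  (Here `s u = true`
encodes `σ(u) = 1` and `s u = false` encodes `σ(u) = −1`.) -/
theorem gibbsCov_eq_influence {V : Type*} [Fintype V] [DecidableEq V] [Nonempty V]
    (J : Matrix V V ℝ) (hJsymm : J.IsSymm) (β : ℝ) (hβ : 0 < β) (u v : V) :
    (gibbsCov J β 0 u v
        = gibbsPr J β 0 (fun s => s u = true ∧ s v = true)
              / gibbsPr J β 0 (fun s => s u = true)
          - gibbsPr J β 0 (fun s => s u = false ∧ s v = true)
              / gibbsPr J β 0 (fun s => s u = false))
    ∧ (gibbsPr J β 0 (fun s => s u = true ∧ s v = true)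
          - gibbsPr J β 0 (fun s => s u = true) * gibbsPr J β 0 (fun s => s v = true)
        = (1 / 4) *
            (gibbsPr J β 0 (fun s => s u = true ∧ s v = true)
                / gibbsPr J β 0 (fun s => s u = true)
              - gibbsPr J β 0 (fun s => s u = false ∧ s v = true)
                  / gibbsPr J β 0 (fun s => s u = false))) := by
  have hcov : gibbsCov J β 0 u v = gibbsExp J β 0 (fun s => spin s u * spin s v) := by
    simp [gibbsCov, gibbsExp_spin]
  rw [hcov]
  simp only [gibbsPr_single, gibbsPr_pair, if_true, Bool.false_eq_true, if_false]
  constructor <;> ring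
end

section
/- Let ℓ : ℕ and let W : Fin (ℓ+1) → ℝ satisfy W i > 0 for all i. Define H = {i : W i ≥ 1}. For each i ∈ H let L_i = {j : i ≤ j and for every t with i ≤ t ≤ j, the product ∏_{k=i}^{t} W k is ≥ 1}, and for i ∉ H let L_i = ∅; let L = ⋃_i L_i. Then for every index j ∉ L and every index t ≤ j, the product ∏_{k=t}^{j} W k is < 1. -/
/-!
The contrapositive holds by an extremal choice. If some suffix-product ending at `j` is at
least `1`, let `m ≤ j` be the last index with `∏_{k=m}^{j} W k ≥ 1`. For `m ≤ t < j` the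
product over `[t + 1, j]` is then `< 1`, while its product with the one over `[m, t]` is `≥ 1`,
so the product over `[m, t]` is at least `1`. Thus every partial product starting at `m` is
`≥ 1`, including `W m` itself, which means `m ∈ H` and `j ∈ L_m`.
-/

open Finset

/-- Every index `j` outside of `L = ⋃_{i ∈ H} L_i` is a left-block vertex:
every suffix-product of `W` ending at `j` is strictly less than `1`.
Here `H = {i : W i ≥ 1}` and, for `i ∈ H`,
`L_i = {j : i ≤ j ∧ ∀ t, i ≤ t ≤ j → ∏_{k=i}^{t} W k ≥ 1}`. -/
theorem left_block_of_not_mem_L {ℓ : ℕ} (W : Fin (ℓ + 1) → ℝ)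
    (hW : ∀ i, 0 < W i) :
    ∀ j : Fin (ℓ + 1),
      j ∉ {j : Fin (ℓ + 1) | ∃ i, 1 ≤ W i ∧ i ≤ j ∧
              ∀ t, i ≤ t → t ≤ j → 1 ≤ ∏ k ∈ Finset.Icc i t, W k} →
      ∀ t, t ≤ j → ∏ k ∈ Finset.Icc t j, W k < 1 := by
  intro j hj
  by_contra! hbad
  obtain ⟨m, ⟨hmj, hm⟩, hmax⟩ :=
    (Set.toFinite {t | t ≤ j ∧ 1 ≤ ∏ k ∈ Finset.Icc t j, W k}).exists_maximal hbad
  have key : ∀ t, m ≤ t → t ≤ j → 1 ≤ ∏ k ∈ Finset.Icc m t, W k := by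
    intro t hmt htj
    rcases htj.eq_or_lt with rfl | hlt
    · exact hm
    have hlt' : t < Order.succ t := Order.lt_succ_of_not_isMax hlt.not_isMax
    have hsucc : ∏ k ∈ Finset.Icc (Order.succ t) j, W k < 1 := by
      by_contra! h
      exact absurd (hmax ⟨Order.succ_le_of_lt hlt, h⟩ (hmt.trans hlt'.le))
        (not_le.2 (hmt.trans_lt hlt'))
    have hsplit : (∏ k ∈ Finset.Icc m t, W k) * ∏ k ∈ Finset.Icc (Order.succ t) j, W k
        = ∏ k ∈ Finset.Icc m j, W k := by
      rw [← Finset.prod_union]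
      · congr 1
        ext k
        have := Order.succ_le_iff_of_not_isMax (b := k) hlt.not_isMax
        simp only [Finset.mem_union, Finset.mem_Icc, this]
        grind
      · rw [Finset.disjoint_left]
        intro k hk hk'
        exact absurd ((Finset.mem_Icc.1 hk').1.trans (Finset.mem_Icc.1 hk).2) (not_le.2 hlt')
    have hpos : 0 < ∏ k ∈ Finset.Icc m t, W k := Finset.prod_pos fun i _ => hW i
    nlinarith
  exact hj ⟨m, by simpa using key m le_rfl hmj, hmj, key⟩
end

section
/- Let N ≥ 1, σ > 0 and δ ≥ 0. Consider the product probability measure P = ⊗_{i ∈ Fin N} (gaussianReal 0 σ²) on (Fin N → ℝ), and let X(ω) = Σ_{i} |ω i|. Then P[ X > (1+δ) · N · σ · √(2/π) ] ≤ exp(− N · δ² / π). (Here N·σ·√(2/π) is the expectation of X.) -/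
open MeasureTheory ProbabilityTheory

/-!
The proof is the Chernoff method. For `Z ∼ N(0, v)` and `t ≥ 0`, completing the square gives
`E[exp (t|Z|)] = exp (t²v/2) · 2 P[N(tv, v) > 0]`. Half of the mass of `N(tv, v)` lies to the right
of its mean, and its density is at most `1/√(2πv)`, so the second factor is at most
`1 + 2tv/√(2πv) ≤ exp (t √v √(2/π))`. By independence and
Markov's inequality, the tail probability of the sum is then at most
`exp (N (-t δ σ √(2/π) + t²σ²/2))`, and `t = δ √(2/π) / σ` makes the exponent `-N δ²/π`.
-/

lemma gaussianPDFReal_le (m : ℝ) (v : NNReal) (x : ℝ) :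
    gaussianPDFReal m v x ≤ (√(2 * Real.pi * v))⁻¹ := by
  rw [gaussianPDFReal]
  refine mul_le_of_le_one_right (by positivity) ?_
  rw [Real.exp_le_one_iff]
  exact div_nonpos_of_nonpos_of_nonneg (neg_nonpos.mpr (sq_nonneg _)) (by positivity)

lemma integral_Ioi_mean_gaussianPDFReal (m : ℝ) {v : NNReal} (hv : v ≠ 0) :
    ∫ x in Set.Ioi m, gaussianPDFReal m v x = 1 / 2 := by
  have h1 : ∫ x in Set.Ioi m, gaussianPDFReal m v x
      = ∫ x in Set.Ioi (0 : ℝ), gaussianPDFReal 0 v x := by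
    rw [← (measurePreserving_add_right volume m).setIntegral_preimage_emb
      (measurableEmbedding_addRight m)]
    simp [gaussianPDFReal]
  have h2 : ∫ x, gaussianPDFReal 0 v |x| = 1 := by
    rw [← integral_gaussianPDFReal_eq_one 0 hv]
    simp [gaussianPDFReal]
  rw [integral_comp_abs] at h2
  rw [h1]
  linarith

lemma integral_Ioi_zero_gaussianPDFReal_le {m : ℝ} (hm : 0 ≤ m) {v : NNReal} (hv : v ≠ 0) :
    ∫ x in Set.Ioi 0, gaussianPDFReal m v x ≤ 1 / 2 + m * (√(2 * Real.pi * v))⁻¹ := by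
  have hi := integrable_gaussianPDFReal m v
  rw [← intervalIntegral.integral_interval_add_Ioi (b := m) hi.integrableOn hi.integrableOn,
    integral_Ioi_mean_gaussianPDFReal m hv]
  have := intervalIntegral.integral_mono_on hm hi.intervalIntegrable
    (intervalIntegrable_const (μ := volume)) (fun x _ => gaussianPDFReal_le m v x)
  simp only [intervalIntegral.integral_const, smul_eq_mul, sub_zero] at this
  linarith

lemma mgf_abs_gaussianReal_le {v : NNReal} (hv : v ≠ 0) {t : ℝ} (ht : 0 ≤ t) :
    mgf (fun x => |x|) (gaussianReal 0 v) t
      ≤ Real.exp (t ^ 2 * v / 2 + 2 * (t * v * (√(2 * Real.pi * v))⁻¹)) := by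
  have hv' : (v : ℝ) ≠ 0 := by exact_mod_cast hv
  rw [mgf, integral_gaussianReal_eq_integral_smul hv]
  -- Completing the square turns the exponential tilt into a shift of the mean by `t * v`.
  have h (x : ℝ) : gaussianPDFReal 0 v x • Real.exp (t * |x|)
      = Real.exp (t ^ 2 * v / 2) * gaussianPDFReal (t * v) v |x| := by
    simp only [gaussianPDFReal, smul_eq_mul]
    rw [mul_assoc, ← Real.exp_add, mul_left_comm, ← Real.exp_add]
    congr 2
    rw [sub_zero, ← sq_abs x]
    field_simp
    ring
  simp_rw [h]
  rw [integral_const_mul, integral_comp_abs, Real.exp_add]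
  gcongr
  have h1 := integral_Ioi_zero_gaussianPDFReal_le (m := t * v) (by positivity) hv
  have h2 := Real.add_one_le_exp (2 * (t * v * (√(2 * Real.pi * v))⁻¹))
  linarith

/-- Upper tail bound for a sum of `N` i.i.d. half-normal random variables with
parameter `σ`: for `δ ≥ 0`,
`P[ X > (1+δ)·E[X] ] ≤ exp(−N·δ²/π)`, where `E[X] = N·σ·√(2/π)`. -/
theorem halfNormal_sum_tail (N : ℕ) (hN : 1 ≤ N) (σ : ℝ) (hσ : 0 < σ)
    (δ : ℝ) (hδ : 0 ≤ δ) :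
    (Measure.pi fun _ : Fin N => gaussianReal 0 ⟨σ ^ 2, sq_nonneg σ⟩)
        {ω | (1 + δ) * (N * σ * Real.sqrt (2 / Real.pi)) < ∑ i, |ω i|}
      ≤ ENNReal.ofReal (Real.exp (-(N * δ ^ 2 / Real.pi))) := by
  set v : NNReal := ⟨σ ^ 2, sq_nonneg σ⟩ with hvdef
  have hvc : (v : ℝ) = σ ^ 2 := rfl
  have hv : v ≠ 0 := by
    rw [← NNReal.coe_ne_zero, hvc]
    positivity
  set P := Measure.pi fun _ : Fin N => gaussianReal 0 v
  set c := √(2 / Real.pi) with hc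
  have hpi := Real.pi_pos
  have hc0 : 0 ≤ c := Real.sqrt_nonneg _
  have hc2 : c ^ 2 = 2 / Real.pi := Real.sq_sqrt (by positivity)
  -- The minimiser of the Chernoff exponent `-t * δ * σ * c + t ^ 2 * σ ^ 2 / 2`.
  set t := δ * c / σ with htdef
  have ht : 0 ≤ t := by positivity
  have hts : t * σ = δ * c := by rw [htdef]; field_simp
  have hpdf : 2 * (t * v * (√(2 * Real.pi * v))⁻¹) = t * σ * c := by
    have h : √(2 * Real.pi * v) * c = 2 * σ := by
      rw [hc, hvc, ← Real.sqrt_mul (by positivity),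
        show 2 * Real.pi * σ ^ 2 * (2 / Real.pi) = (2 * σ) ^ 2 by field_simp]
      exact Real.sqrt_sq (by positivity)
    have h0 : √(2 * Real.pi * v) ≠ 0 := by
      rw [hvc]; positivity
    have h1 : (√(2 * Real.pi * v))⁻¹ = c / (2 * σ) := by
      rw [inv_eq_one_div, div_eq_div_iff h0 (by positivity)]
      linear_combination -h
    rw [h1, hvc, mul_comm t]
    field_simp
  let X : Fin N → (Fin N → ℝ) → ℝ := fun i ω => |ω i|
  have hXm (i : Fin N) : Measurable (X i) := by fun_prop
  have hind : iIndepFun X P :=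
    iIndepFun_pi (X := fun _ x => |x|) (μ := fun _ : Fin N => gaussianReal 0 v)
      (fun _ => by fun_prop)
  have hint1 : Integrable (fun x : ℝ => Real.exp (t * |x|)) (gaussianReal 0 v) :=
    integrable_exp_mul_abs (X := fun x => x) (integrable_exp_mul_gaussianReal t)
      (integrable_exp_mul_gaussianReal (-t))
  have hmp (i : Fin N) : MeasurePreserving (Function.eval i) P (gaussianReal 0 v) :=
    measurePreserving_eval (fun _ : Fin N => gaussianReal 0 v) i
  have hint (i : Fin N) : Integrable (fun ω => Real.exp (t * X i ω)) P :=
    (hmp i).integrable_comp_of_integrable hint1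
  have hmgf (i : Fin N) : mgf (X i) P t = mgf (fun x => |x|) (gaussianReal 0 v) t := by
    rw [mgf, mgf, ← (hmp i).map_eq, integral_map (hmp i).aemeasurable (by fun_prop)]
  have hcher := measure_ge_le_exp_mul_mgf (μ := P) (X := ∑ i, X i)
    ((1 + δ) * (N * σ * c)) ht
    (hind.integrable_exp_mul_sum hXm (fun i _ => hint i))
  rw [hind.mgf_sum hXm] at hcher
  simp only [hmgf, Finset.prod_const, Finset.card_univ, Fintype.card_fin] at hcher
  have hbound := mgf_abs_gaussianReal_le hv ht
  rw [hpdf] at hbound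
  refine (measure_mono (t := {ω | (1 + δ) * (N * σ * c) ≤ (∑ i, X i) ω}) ?_).trans ?_
  · intro ω hω
    simp only [Set.mem_ofPred_eq, Finset.sum_apply] at hω ⊢
    exact hω.le
  · rw [← ofReal_measureReal]
    refine ENNReal.ofReal_le_ofReal (hcher.trans ?_)
    calc _ ≤ Real.exp (-t * ((1 + δ) * (N * σ * c)))
          * Real.exp (t ^ 2 * v / 2 + t * σ * c) ^ N := by
          have := mgf_nonneg (X := fun x : ℝ => |x|) (μ := gaussianReal 0 v) (t := t)
          gcongr
      _ = _ := by
          rw [← Real.exp_nat_mul, ← Real.exp_add]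
          congr 1
          have h3 : t ^ 2 * (v : ℝ) = δ ^ 2 * c ^ 2 := by
            rw [hvc, ← mul_pow, hts, mul_pow]
          have h4 : N * δ ^ 2 / Real.pi = N * δ ^ 2 * c ^ 2 / 2 := by
            rw [hc2]; ring
          rw [h4, h3]
          linear_combination (-δ * N * c) * hts
end

section
/- Let σ > 0 and t ∈ ℝ. Then ∫ exp(t·|x|) d(gaussianReal 0 σ²)(x) = 2 · exp(t²σ²/2) · Φ(σ·t), where Φ is the standard Gaussian cumulative distribution function. -/
/-!
By scaling, the integral is `∫ exp (a * |z|) dγ(z)` with `a = σ * t` and `γ` the standard Gaussian.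
The integrand and the density `φ` are even, so this is twice the integral over `z > 0`, where
completing the square gives `exp (a * z) * φ z = exp (a ^ 2 / 2) * φ (a - z)`; the reflection
`z ↦ a - z` turns `∫ z in Ioi 0, φ (a - z)` into `γ (Iic a) = Φ a`.
-/

open MeasureTheory ProbabilityTheory

/-- The standard Gaussian cumulative distribution function. -/
noncomputable def stdGaussianCDF (y : ℝ) : ℝ :=
  ((gaussianReal 0 1) (Set.Iic y)).toReal

lemma exp_mul_gaussianPDFReal (a z : ℝ) :
    Real.exp (a * z) * gaussianPDFReal 0 1 z
      = Real.exp (a ^ 2 / 2) * gaussianPDFReal 0 1 (a - z) := by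
  simp only [gaussianPDFReal, NNReal.coe_one, mul_one, sub_zero]
  rw [mul_left_comm, mul_left_comm (Real.exp (a ^ 2 / 2)), ← Real.exp_add, ← Real.exp_add]
  congr 2
  ring

lemma setIntegral_gaussianPDFReal_sub (a : ℝ) :
    ∫ z in Set.Ioi 0, gaussianPDFReal 0 1 (a - z) = stdGaussianCDF a := by
  rw [stdGaussianCDF, gaussianReal_apply_eq_integral 0 one_ne_zero,
    ENNReal.toReal_ofReal (integral_nonneg fun x => gaussianPDFReal_nonneg 0 1 x),
    integral_Iic_eq_integral_Iio, ← integral_indicator measurableSet_Ioi,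
    ← integral_indicator measurableSet_Iio,
    ← integral_sub_left_eq_self ((Set.Iio a).indicator (gaussianPDFReal 0 1)) volume a]
  congr 1
  ext z
  simp [Set.indicator_apply]

lemma integral_exp_mul_abs_gaussianReal (a : ℝ) :
    ∫ z, Real.exp (a * |z|) ∂(gaussianReal 0 1)
      = 2 * Real.exp (a ^ 2 / 2) * stdGaussianCDF a := by
  have h_even (z : ℝ) : gaussianPDFReal 0 1 z • Real.exp (a * |z|)
      = Real.exp (a * |z|) * gaussianPDFReal 0 1 |z| := by
    simp [gaussianPDFReal, mul_comm]
  rw [integral_gaussianReal_eq_integral_smul one_ne_zero]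
  simp_rw [h_even]
  rw [integral_comp_abs (f := fun z => Real.exp (a * z) * gaussianPDFReal 0 1 z)]
  simp_rw [exp_mul_gaussianPDFReal]
  rw [integral_const_mul, setIntegral_gaussianPDFReal_sub, mul_assoc]

/-- Moment generating function of the half-normal distribution:
`∫ exp(t·|x|) dN(0,σ²)(x) = 2 · exp(t²σ²/2) · Φ(σt)`. -/
theorem halfNormal_mgf (σ : ℝ) (hσ : 0 < σ) (t : ℝ) :
    ∫ x, Real.exp (t * |x|) ∂(gaussianReal 0 ⟨σ ^ 2, sq_nonneg σ⟩)
      = 2 * Real.exp (t ^ 2 * σ ^ 2 / 2) * stdGaussianCDF (σ * t) := by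
  have h_map : gaussianReal 0 ⟨σ ^ 2, sq_nonneg σ⟩ = (gaussianReal 0 1).map (σ * ·) := by
    rw [gaussianReal_map_const_mul, mul_zero, mul_one]
    rfl
  rw [h_map, integral_map (by fun_prop) (by fun_prop)]
  have h_abs (z : ℝ) : t * |σ * z| = σ * t * |z| := by
    rw [abs_mul, abs_of_pos hσ]
    ring
  simp_rw [h_abs]
  rw [integral_exp_mul_abs_gaussianReal, mul_pow, mul_comm (σ ^ 2)]
end

section
/- There exists d₀ ≥ 1 such that for every real d ≥ d₀ there exists n₀ such that for every natural number n ≥ n₀ the following holds. Let E = {p : Sym2 (Fin n) // ¬ p.IsDiag} be the set of unordered pairs of distinct elements of Fin n, and let P be the product over e ∈ E of the Bernoulli measure with success probability d/n on {false, true}, a probability measure on (E → Bool). Then the P-probability of the event that there exists a finite set S of vertices of Fin n with card S ≤ 2·(log n)/(log d)² such that the number of pairs e ∈ E with both endpoints in S and ω e = true is at least card S + 1, is at most n^(−3/4). -/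
/-!
The proof is a first-moment (union) bound. If some `S` with `|S| = s` spans more than `s` edges, then
some set `F` of exactly `s + 1` pairs inside `S` consists of edges, which has probability
`(d/n)^(s+1)` (`measureReal_all_true`). There are `n.choose s` choices of `S` and at most
`(s^2).choose (s+1)` choices of `F`, and since `s^s / s! ≤ e^s` the expected number of such pairs is
at most `s * d * (e^2 * d)^s / n` (`first_moment_term_le`).
Writing `L = log d`, for `s ≤ 2 * log n / L^2` the factor `(e^2 * d)^s` is at most
`n^((2 + L) * 2 / L^2)`, and the exponent is at most `1/8` once `L ≥ 20`. Summing over `s` costs only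
logarithmic factors, so the total is at most `4 * d * (log n)^2 * n^(1/8) / n`, and this is
below `n^(-3/4)` for large `n` (`final_estimate`).
-/

open MeasureTheory ProbabilityTheory

/-- The Bernoulli measure on `Bool` with success probability `p`:
mass `p` at `true` and mass `1 − p` at `false`. -/
noncomputable def bernoulliBool (p : ENNReal) : Measure Bool :=
  p • Measure.dirac true + (1 - p) • Measure.dirac false

lemma isProbabilityMeasure_bernoulliBool {p : ENNReal} (hp : p ≤ 1) :
    IsProbabilityMeasure (bernoulliBool p) := by
  constructor
  simp [bernoulliBool, hp]

lemma bernoulliBool_true (p : ENNReal) : bernoulliBool p {true} = p := by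
  simp [bernoulliBool]

lemma measureReal_all_true {ι : Type*} [Fintype ι] [DecidableEq ι] {p : ℝ} (hp0 : 0 ≤ p)
    (hp : p ≤ 1) (F : Finset ι) :
    (Measure.pi fun _ : ι => bernoulliBool (ENNReal.ofReal p)).real
      {ω | ∀ e ∈ F, ω e = true} = p ^ F.card := by
  have hP : IsProbabilityMeasure (bernoulliBool (ENNReal.ofReal p)) :=
    isProbabilityMeasure_bernoulliBool (by simpa using hp)
  have hset : {ω : ι → Bool | ∀ e ∈ F, ω e = true}
      = Set.pi Set.univ (fun e => if e ∈ F then {true} else Set.univ) := by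
    ext ω
    simp only [Set.mem_ofPred_eq, Set.mem_pi, Set.mem_univ, true_implies]
    refine forall_congr' fun e => ?_
    by_cases h : e ∈ F <;> simp [h]
  rw [hset, measureReal_def, Measure.pi_pi]
  have : ∀ e : ι, bernoulliBool (ENNReal.ofReal p) (if e ∈ F then {true} else Set.univ)
      = if e ∈ F then ENNReal.ofReal p else 1 := by
    intro e
    split_ifs
    · exact bernoulliBool_true _
    · exact measure_univ
  simp only [this]
  rw [Finset.prod_ite_mem]
  simp [hp0]

/-- The crude bound `s ^ 2` suffices in place of the exact count `s * (s - 1) / 2`. -/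
lemma card_pairs_inside_le {n : ℕ} (S : Finset (Fin n))
    [DecidablePred fun e : {p : Sym2 (Fin n) // ¬ p.IsDiag} => ∀ x ∈ e.1, x ∈ S] :
    (Finset.univ.filter
      (fun e : {p : Sym2 (Fin n) // ¬ p.IsDiag} => ∀ x ∈ e.1, x ∈ S)).card ≤ S.card ^ 2 := by
  calc _ ≤ S.sym2.card := by
        refine Finset.card_le_card_of_injOn (fun e => e.1) ?_ (Subtype.val_injective.injOn)
        intro e he
        exact Finset.mem_coe.2 (Finset.mem_sym2_iff.2 (Finset.mem_filter.1 he).2)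
    _ = (S.card + 1).choose 2 := Finset.card_sym2 S
    _ ≤ S.card ^ 2 := by
        rw [Nat.choose_two_right]
        apply Nat.div_le_of_le_mul
        simp only [Nat.add_sub_cancel]
        nlinarith [Nat.le_self_pow (n := 2) (by norm_num) S.card]

lemma measureReal_spans_le {n : ℕ} {p : ℝ} (hp0 : 0 ≤ p) (hp : p ≤ 1) (S : Finset (Fin n))
    [∀ ω : {p : Sym2 (Fin n) // ¬ p.IsDiag} → Bool,
      DecidablePred fun e : {p : Sym2 (Fin n) // ¬ p.IsDiag} => ω e = true ∧ ∀ x ∈ e.1, x ∈ S] :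
    (Measure.pi fun _ : {p : Sym2 (Fin n) // ¬ p.IsDiag} =>
        bernoulliBool (ENNReal.ofReal p)).real
      {ω | S.card + 1 ≤ (Finset.univ.filter
        (fun e : {p : Sym2 (Fin n) // ¬ p.IsDiag} => ω e = true ∧ ∀ x ∈ e.1, x ∈ S)).card}
      ≤ ((S.card ^ 2).choose (S.card + 1) : ℕ) * p ^ (S.card + 1) := by
  classical
  have hP : IsProbabilityMeasure (bernoulliBool (ENNReal.ofReal p)) :=
    isProbabilityMeasure_bernoulliBool (by simpa using hp)
  set μ := Measure.pi fun _ : {p : Sym2 (Fin n) // ¬ p.IsDiag} =>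
    bernoulliBool (ENNReal.ofReal p)
  set E := Finset.univ.filter
    (fun e : {p : Sym2 (Fin n) // ¬ p.IsDiag} => ∀ x ∈ e.1, x ∈ S) with hE
  calc _ ≤ μ.real (⋃ F ∈ E.powersetCard (S.card + 1), {ω | ∀ e ∈ F, ω e = true}) := by
        refine measureReal_mono ?_ (measure_ne_top _ _)
        intro ω hω
        obtain ⟨F, hF, hc⟩ := Finset.exists_subset_card_eq hω
        simp only [Set.mem_iUnion]
        refine ⟨F, Finset.mem_powersetCard.2 ⟨fun e he => ?_, hc⟩, fun e he => ?_⟩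
        · exact Finset.mem_filter.2 ⟨Finset.mem_univ _, (Finset.mem_filter.1 (hF he)).2.2⟩
        · exact (Finset.mem_filter.1 (hF he)).2.1
    _ ≤ ∑ F ∈ E.powersetCard (S.card + 1), μ.real {ω | ∀ e ∈ F, ω e = true} :=
        measureReal_biUnion_finset_le _ _
    _ = ∑ F ∈ E.powersetCard (S.card + 1), p ^ (S.card + 1) := by
        refine Finset.sum_congr rfl fun F hF => ?_
        rw [measureReal_all_true hp0 hp, (Finset.mem_powersetCard.1 hF).2]
    _ = (E.card.choose (S.card + 1) : ℕ) * p ^ (S.card + 1) := by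
        rw [Finset.sum_const, Finset.card_powersetCard, nsmul_eq_mul]
    _ ≤ _ := by
        gcongr
        exact card_pairs_inside_le S

/-- The left side dominates the expected number of pairs `(S, F)` with `|S| = s` and `F` a set of
`s + 1` edges inside `S`. The powers of `n` cancel down to a single `1 / n`. -/
lemma first_moment_term_le {n : ℕ} (hn : 0 < n) {d : ℝ} (hd : 0 ≤ d) (s : ℕ) :
    (n.choose s : ℝ) * (((s ^ 2).choose (s + 1) : ℕ) * (d / n) ^ (s + 1))
      ≤ s * d * (Real.exp 2 * d) ^ s / n := by
  have h1 : (n.choose s : ℝ) ≤ (n : ℝ) ^ s / s.factorial := Nat.choose_le_pow_div s n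
  have h2 : (((s ^ 2).choose (s + 1) : ℕ) : ℝ) ≤ (s : ℝ) ^ (s + 1) * Real.exp s := by
    calc (((s ^ 2).choose (s + 1) : ℕ) : ℝ)
        ≤ (((s ^ 2 : ℕ) : ℝ)) ^ (s + 1) / (s + 1).factorial := Nat.choose_le_pow_div _ _
      _ = (s : ℝ) ^ (s + 1) * ((s : ℝ) ^ (s + 1) / (s + 1).factorial) := by
          push_cast; ring
      _ ≤ (s : ℝ) ^ (s + 1) * ((s : ℝ) ^ s / s.factorial) := by
          gcongr ?_ * ?_
          rw [Nat.factorial_succ, pow_succ']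
          push_cast
          rw [mul_div_mul_comm]
          apply mul_le_of_le_one_left (by positivity)
          rw [div_le_one (by positivity)]
          linarith
      _ ≤ _ := by
          gcongr
          exact Real.pow_div_factorial_le_exp _ (by positivity) s
  have h3 : (s : ℝ) ^ s / s.factorial ≤ Real.exp s :=
    Real.pow_div_factorial_le_exp _ (by positivity) s
  have hn' : (0 : ℝ) < n := by exact_mod_cast hn
  calc _ ≤ (n : ℝ) ^ s / s.factorial * ((s : ℝ) ^ (s + 1) * Real.exp s * (d / n) ^ (s + 1)) := by
        gcongr
    _ = ((s : ℝ) ^ s / s.factorial) * (s * d * d ^ s * Real.exp s / n) := by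
        rw [div_pow]
        field_simp
        ring
    _ ≤ Real.exp s * (s * d * d ^ s * Real.exp s / n) := by
        gcongr
    _ = _ := by
        rw [mul_pow, ← Real.exp_nat_mul, mul_comm (s : ℝ) 2, two_mul, Real.exp_add]
        ring

/-- The union bound over all `S` of size at most `K`. -/
lemma measureReal_exists_spans_le {n : ℕ} (hn : 0 < n) {d : ℝ} (hd : 1 ≤ d) (hdn : d ≤ n) (K : ℕ)
    [∀ (ω : {p : Sym2 (Fin n) // ¬ p.IsDiag} → Bool) (S : Finset (Fin n)),
      DecidablePred fun e : {p : Sym2 (Fin n) // ¬ p.IsDiag} => ω e = true ∧ ∀ x ∈ e.1, x ∈ S] :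
    (Measure.pi fun _ : {p : Sym2 (Fin n) // ¬ p.IsDiag} =>
        bernoulliBool (ENNReal.ofReal (d / n))).real
      {ω | ∃ S : Finset (Fin n), S.card ≤ K ∧ S.card + 1 ≤ (Finset.univ.filter
        (fun e : {p : Sym2 (Fin n) // ¬ p.IsDiag} => ω e = true ∧ ∀ x ∈ e.1, x ∈ S)).card}
      ≤ (K + 1) * (K * d * (Real.exp 2 * d) ^ K / n) := by
  have hn' : (0 : ℝ) < n := by exact_mod_cast hn
  have hp : d / n ≤ 1 := by rwa [div_le_one hn']
  have hp0 : 0 ≤ d / n := by positivity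
  have hP : IsProbabilityMeasure (bernoulliBool (ENNReal.ofReal (d / n))) :=
    isProbabilityMeasure_bernoulliBool (by simpa using hp)
  set μ := Measure.pi fun _ : {p : Sym2 (Fin n) // ¬ p.IsDiag} =>
    bernoulliBool (ENNReal.ofReal (d / n))
  let A : Finset (Fin n) → Set ({p : Sym2 (Fin n) // ¬ p.IsDiag} → Bool) := fun S =>
    {ω | S.card + 1 ≤ (Finset.univ.filter
        (fun e : {p : Sym2 (Fin n) // ¬ p.IsDiag} => ω e = true ∧ ∀ x ∈ e.1, x ∈ S)).card}
  have hexp : (1 : ℝ) ≤ Real.exp 2 * d :=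
    one_le_mul_of_one_le_of_one_le (Real.one_le_exp (by norm_num)) hd
  calc _ ≤ μ.real (⋃ s ∈ Finset.range (K + 1),
          ⋃ S ∈ (Finset.univ : Finset (Fin n)).powersetCard s, A S) := by
        refine measureReal_mono ?_ (measure_ne_top _ _)
        rintro ω ⟨S, hS, h⟩
        simp only [Set.mem_iUnion]
        exact ⟨S.card, Finset.mem_range.2 (by omega), S,
          Finset.mem_powersetCard.2 ⟨Finset.subset_univ _, rfl⟩, h⟩
    _ ≤ ∑ s ∈ Finset.range (K + 1),
          μ.real (⋃ S ∈ (Finset.univ : Finset (Fin n)).powersetCard s, A S) :=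
        measureReal_biUnion_finset_le _ _
    _ ≤ ∑ s ∈ Finset.range (K + 1), K * d * (Real.exp 2 * d) ^ K / n := by
        refine Finset.sum_le_sum fun s hs => ?_
        have hsK : s ≤ K := by have := Finset.mem_range.1 hs; omega
        calc _ ≤ ∑ S ∈ (Finset.univ : Finset (Fin n)).powersetCard s, μ.real (A S) :=
              measureReal_biUnion_finset_le _ _
          _ ≤ ∑ S ∈ (Finset.univ : Finset (Fin n)).powersetCard s,
                (((s ^ 2).choose (s + 1) : ℕ) * (d / n) ^ (s + 1) : ℝ) := by
              refine Finset.sum_le_sum fun S hS => ?_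
              rw [← (Finset.mem_powersetCard.1 hS).2]
              exact measureReal_spans_le hp0 hp S
          _ = (n.choose s : ℝ) * (((s ^ 2).choose (s + 1) : ℕ) * (d / n) ^ (s + 1)) := by
              rw [Finset.sum_const, Finset.card_powersetCard, nsmul_eq_mul, Finset.card_univ,
                Fintype.card_fin]
          _ ≤ s * d * (Real.exp 2 * d) ^ s / n := first_moment_term_le hn (by linarith) s
          _ ≤ _ := by gcongr
    _ = _ := by
        rw [Finset.sum_const, Finset.card_range, nsmul_eq_mul]
        push_cast
        rfl

lemma final_estimate {n : ℕ} {d : ℝ} (hL : 20 ≤ Real.log d) (hd : 0 < d)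
    (hy1 : 1 ≤ Real.log n) (hlog : 4 * d * Real.log n ^ 2 ≤ Real.exp (1 / 8 * Real.log n)) {K : ℕ}
    (hK : (K : ℝ) ≤ 2 * Real.log n / Real.log d ^ 2) :
    (K + 1) * (K * d * (Real.exp 2 * d) ^ K / n) ≤ (n : ℝ) ^ (-(3 : ℝ) / 4) := by
  have hn : (0 : ℝ) < n := by
    rcases Nat.eq_zero_or_pos n with rfl | h
    · norm_num at hy1
    · exact_mod_cast h
  set y := Real.log n with hy
  set L := Real.log d
  have hKL : K * L ^ 2 ≤ 2 * y := by rwa [le_div_iff₀ (by positivity)] at hK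
  have hK0 : (0 : ℝ) ≤ K := by positivity
  have hKy : (K : ℝ) ≤ y := by nlinarith [mul_nonneg hK0 (by nlinarith : 0 ≤ L ^ 2 - 2)]
  have hpow : (Real.exp 2 * d) ^ K ≤ Real.exp (1 / 8 * y) := by
    rw [← Real.exp_log hd, ← Real.exp_add, ← Real.exp_nat_mul]
    apply Real.exp_le_exp.2
    -- For `L ≥ 20`, `16 * (2 + L) ≤ L ^ 2`.
    nlinarith [mul_nonneg hK0 (by nlinarith : 0 ≤ L ^ 2 - 16 * (2 + L))]
  have hnexp : (n : ℝ) = Real.exp y := (Real.exp_log hn).symm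
  calc (K + 1) * (K * d * (Real.exp 2 * d) ^ K / n)
      ≤ (y + y) * (y * d * Real.exp (1 / 8 * y) / n) := by gcongr
    _ = 2 * d * y ^ 2 * Real.exp (1 / 8 * y) / n := by ring
    _ ≤ Real.exp (1 / 8 * y) * Real.exp (1 / 8 * y) / n := by
        gcongr
        nlinarith [mul_nonneg hd.le (sq_nonneg y)]
    _ = (n : ℝ) ^ (-(3 : ℝ) / 4) := by
        rw [Real.rpow_def_of_pos hn, ← hy, hnexp, ← Real.exp_add, ← Real.exp_sub]
        congr 1
        ring

lemma eventually_log_sq_le (d : ℝ) :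
    ∀ᶠ n : ℕ in Filter.atTop, 4 * d * Real.log n ^ 2 ≤ Real.exp (1 / 8 * Real.log n) := by
  have h := (isLittleO_pow_exp_pos_mul_atTop 2 (by norm_num : (0 : ℝ) < 1 / 8)).const_mul_left
    (4 * d)
  have h' := (h.bound one_pos)
  have ht := Real.tendsto_log_atTop.comp (tendsto_natCast_atTop_atTop (R := ℝ))
  filter_upwards [ht.eventually h'] with n hn
  simp only [Function.comp, Real.norm_eq_abs, Real.abs_exp, one_mul] at hn
  exact (le_abs_self _).trans hn

open Classical in
/-- In the random graph `G(n,d/n)` (each unordered pair of distinct vertices is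
an edge independently with probability `d/n`), for all large enough `d` and `n`,
with probability at least `1 − n^{-3/4}` every vertex set `S` with
`|S| ≤ 2·log n/(log d)²` spans at most `|S|` edges. -/
theorem small_sets_span_few_edges :
    ∃ d₀ : ℝ, 1 ≤ d₀ ∧ ∀ d : ℝ, d₀ ≤ d → ∃ n₀ : ℕ, ∀ n : ℕ, n₀ ≤ n →
      (Measure.pi fun _ : {p : Sym2 (Fin n) // ¬ p.IsDiag} =>
          bernoulliBool (ENNReal.ofReal (d / n)))
          {ω | ∃ S : Finset (Fin n),
            (S.card : ℝ) ≤ 2 * Real.log n / (Real.log d) ^ 2 ∧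
            S.card + 1 ≤
              (Finset.univ.filter
                (fun e : {p : Sym2 (Fin n) // ¬ p.IsDiag} =>
                  ω e = true ∧ ∀ x ∈ e.1, x ∈ S)).card}
        ≤ ENNReal.ofReal ((n : ℝ) ^ (-(3 : ℝ) / 4)) := by
  refine ⟨Real.exp 20, Real.one_le_exp (by norm_num), fun d hd => ?_⟩
  have hd1 : 1 ≤ d := (Real.one_le_exp (by norm_num)).trans hd
  have hd0 : 0 < d := by linarith
  have hL : 20 ≤ Real.log d := (Real.le_log_iff_exp_le hd0).2 hd
  have ht := Real.tendsto_log_atTop.comp (tendsto_natCast_atTop_atTop (R := ℝ))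
  have hev := (eventually_log_sq_le d).and ((ht.eventually_ge_atTop 1).and
    (((tendsto_natCast_atTop_atTop (R := ℝ)).eventually_ge_atTop d).and
      (Filter.eventually_gt_atTop 0)))
  obtain ⟨n₀, hn₀⟩ := Filter.eventually_atTop.1 hev
  refine ⟨n₀, fun n hn => ?_⟩
  obtain ⟨hlog, hy1, hdn, hpos⟩ := hn₀ n hn
  simp only [Function.comp] at hy1
  have hx : 0 ≤ 2 * Real.log n / Real.log d ^ 2 := by positivity
  have hP : IsProbabilityMeasure (bernoulliBool (ENNReal.ofReal (d / n))) :=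
    isProbabilityMeasure_bernoulliBool (by
      simpa using (div_le_one (by exact_mod_cast hpos : (0 : ℝ) < n)).2 hdn)
  rw [← ofReal_measureReal]
  apply ENNReal.ofReal_le_ofReal
  have key := measureReal_exists_spans_le hpos hd1 hdn ⌊2 * Real.log n / Real.log d ^ 2⌋₊
  simp only [Nat.le_floor_iff hx] at key
  exact key.trans (final_estimate hL hd0 hy1 hlog (Nat.floor_le hx))
end

section
/- Let b ∈ ℝ and let s ≥ 0 satisfy 2·b²·s < 1. Then ∫ exp(s · (tanh(b·x))²) d(gaussianReal 0 1)(x) ≤ (1 − 2·b²·s)^(−1/2). -/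
open MeasureTheory ProbabilityTheory

/-!
Since `|tanh y| ≤ |y|`, the integrand is dominated by `exp (s * b² * x²)`. Multiplied by the
standard Gaussian density, this majorant becomes `(√(2π))⁻¹ * exp (-(1/2 - s * b²) * x²)`, which
is integrable because `2 * b² * s < 1`, and the Gaussian integral evaluates it to
`(1 - 2 * b² * s) ^ (-1/2)`.
-/

/-- The function `x * cosh x - sinh x` vanishes at `0` and has derivative `x * sinh x ≥ 0`. -/
lemma sinh_le_mul_cosh {x : ℝ} (hx : 0 ≤ x) : Real.sinh x ≤ x * Real.cosh x := by
  have hd : ∀ y : ℝ, HasDerivAt (fun y => y * Real.cosh y - Real.sinh y) (y * Real.sinh y) y := by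
    intro y
    have h := ((hasDerivAt_id y).mul (Real.hasDerivAt_cosh y)).sub (Real.hasDerivAt_sinh y)
    exact h.congr_deriv (by simp only [id_eq]; ring)
  have hm : Monotone (fun y => y * Real.cosh y - Real.sinh y) := by
    refine monotone_of_deriv_nonneg (fun y => (hd y).differentiableAt) fun y => ?_
    rw [(hd y).deriv]
    rcases le_total 0 y with h | h
    · exact mul_nonneg h (Real.sinh_nonneg_iff.2 h)
    · exact mul_nonneg_of_nonpos_of_nonpos h (Real.sinh_nonpos_iff.2 h)
  have := hm hx
  simp only [zero_mul, Real.sinh_zero, sub_zero] at this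
  linarith

lemma tanh_sq_le_sq (x : ℝ) : Real.tanh x ^ 2 ≤ x ^ 2 := by
  have key : ∀ y : ℝ, 0 ≤ y → Real.tanh y ^ 2 ≤ y ^ 2 := by
    intro y hy
    rw [Real.tanh_eq_sinh_div_cosh]
    refine pow_le_pow_left₀ (div_nonneg (Real.sinh_nonneg_iff.2 hy) (Real.cosh_pos y).le) ?_ 2
    exact (div_le_iff₀ (Real.cosh_pos y)).2 (sinh_le_mul_cosh hy)
  rcases le_total 0 x with h | h
  · exact key x h
  · simpa [Real.tanh_neg] using key (-x) (neg_nonneg.2 h)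

/-- Moment generating function bound for the squared edge influence of the
2-spin model: for `s ≥ 0` with `2b²s < 1`,
`∫ exp(s·tanh(b·x)²) dN(0,1)(x) ≤ (1 − 2b²s)^{-1/2}`. -/
theorem tanh_sq_mgf_le (b s : ℝ) (hs : 0 ≤ s) (hbs : 2 * b ^ 2 * s < 1) :
    ∫ x, Real.exp (s * (Real.tanh (b * x)) ^ 2) ∂(gaussianReal 0 1)
      ≤ (1 - 2 * b ^ 2 * s) ^ (-(1 : ℝ) / 2) := by
  have hc : 0 < 1 / 2 - s * b ^ 2 := by linarith
  rw [integral_gaussianReal_eq_integral_smul one_ne_zero]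
  calc ∫ x, gaussianPDFReal 0 1 x • Real.exp (s * (Real.tanh (b * x)) ^ 2)
      ≤ ∫ x, (√(2 * Real.pi))⁻¹ * Real.exp (-(1 / 2 - s * b ^ 2) * x ^ 2) := by
        refine integral_mono_of_nonneg (Filter.Eventually.of_forall fun x => ?_)
          ((integrable_exp_neg_mul_sq hc).const_mul _) (Filter.Eventually.of_forall fun x => ?_)
        · exact mul_nonneg (gaussianPDFReal_nonneg 0 1 x) (Real.exp_pos _).le
        · have h := mul_le_mul_of_nonneg_left (tanh_sq_le_sq (b * x)) hs
          simp only [gaussianPDFReal, smul_eq_mul, NNReal.coe_one, mul_one, sub_zero]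
          rw [mul_assoc, ← Real.exp_add]
          gcongr
          linarith
    _ = (1 - 2 * b ^ 2 * s) ^ (-(1 : ℝ) / 2) := by
        have h1 : 0 < 1 - 2 * b ^ 2 * s := by linarith
        rw [integral_const_mul, integral_gaussian, neg_div, Real.rpow_neg h1.le,
          ← Real.sqrt_eq_rpow, ← Real.sqrt_inv, ← Real.sqrt_inv, ← Real.sqrt_mul (by positivity)]
        congr 1
        have h2 : 1 / 2 - s * b ^ 2 = (1 - 2 * b ^ 2 * s) / 2 := by ring
        rw [h2]
        have := Real.pi_pos
        field_simp
end

section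
/- Let V and T be finite nonempty types and let K : Matrix V T ℝ be a matrix all of whose entries lie in {0,1}, such that every column of K contains exactly one entry equal to 1 and every row of K contains at most 4 entries equal to 1. Then for every matrix Y : Matrix T T ℝ, ‖K · Y · Kᵀ‖₂ ≤ 4 · ‖Y‖₂. -/
/-! Since each column of `K` has a single `1`, distinct rows have disjoint supports, so `K * Kᵀ` is
diagonal (`copy_mul_transpose`), with diagonal entries the row counts, which are at most `4`.
By the C⋆-identity `‖K‖² = ‖Kᵀ‖² = ‖K * Kᵀ‖ ≤ 4`, and submultiplicativity of the `ℓ²` operator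
norm gives `‖K * Y * Kᵀ‖ ≤ ‖K‖ * ‖Y‖ * ‖Kᵀ‖ ≤ 4 * ‖Y‖`. -/

open Matrix

open Classical in
/-- The Gram matrix of the rows of a copy matrix is the diagonal matrix of copy counts. -/
theorem copy_mul_transpose {V T : Type*} [Fintype V] [Fintype T] [DecidableEq V]
    (K : Matrix V T ℝ)
    (h01 : ∀ x z, K x z = 0 ∨ K x z = 1)
    (hcol : ∀ z, (Finset.univ.filter fun x => K x z = 1).card = 1) :
    K * Kᵀ = Matrix.diagonal
      fun x => ((Finset.univ.filter fun z => K x z = 1).card : ℝ) := by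
  ext x y
  rw [Matrix.mul_apply]
  by_cases hxy : x = y
  · subst hxy
    rw [Matrix.diagonal_apply_eq, Finset.card_filter, Nat.cast_sum]
    refine Finset.sum_congr rfl fun z _ => ?_
    rcases h01 x z with h | h <;> simp [h]
  · rw [Matrix.diagonal_apply_ne _ hxy]
    refine Finset.sum_eq_zero fun z _ => ?_
    rw [Matrix.transpose_apply]
    rcases h01 x z with hx | hx
    · simp [hx]
    rcases h01 y z with hy | hy
    · simp [hy]
    exact absurd (Finset.card_le_one.mp (hcol z).le x (by simp [hx]) y (by simp [hy])) hxy

open scoped Matrix.Norms.L2Operator in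
open Classical in
/-- If `K` is a 0/1 matrix in which every column has exactly one `1` and every
row has at most four `1`s, then `‖K·Y·Kᵀ‖₂ ≤ 4·‖Y‖₂`. -/
theorem opNorm_copy_conj_le {V T : Type*} [Fintype V] [Fintype T]
    [DecidableEq V] [DecidableEq T] [Nonempty V] [Nonempty T]
    (K : Matrix V T ℝ)
    (h01 : ∀ x z, K x z = 0 ∨ K x z = 1)
    (hcol : ∀ z, (Finset.univ.filter fun x => K x z = 1).card = 1)
    (hrow : ∀ x, (Finset.univ.filter fun z => K x z = 1).card ≤ 4)
    (Y : Matrix T T ℝ) :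
    opNorm (K * Y * Kᵀ) ≤ 4 * opNorm Y := by
  have hdiag : ‖K * Kᵀ‖ ≤ 4 := by
    rw [copy_mul_transpose K h01 hcol, Matrix.l2_opNorm_diagonal]
    refine (pi_norm_le_iff_of_nonneg (by norm_num)).mpr fun x => ?_
    rw [Real.norm_natCast]
    exact_mod_cast hrow x
  have hT : ‖Kᵀ‖ = ‖K‖ := by
    rw [← Matrix.conjTranspose_eq_transpose_of_trivial, Matrix.l2_opNorm_conjTranspose]
  have hsq : ‖K‖ * ‖K‖ ≤ 4 := by
    have h := Matrix.l2_opNorm_conjTranspose_mul_self Kᵀ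
    rw [Matrix.conjTranspose_eq_transpose_of_trivial, Matrix.transpose_transpose, hT] at h
    exact h ▸ hdiag
  -- `opNorm` unfolds definitionally to the scoped `ℓ²` operator norm used here.
  calc ‖K * Y * Kᵀ‖ ≤ ‖K * Y‖ * ‖Kᵀ‖ := Matrix.l2_opNorm_mul _ _
    _ ≤ ‖K‖ * ‖Y‖ * ‖Kᵀ‖ := by gcongr; exact Matrix.l2_opNorm_mul _ _
    _ = ‖K‖ * ‖K‖ * ‖Y‖ := by rw [hT]; ring
    _ ≤ 4 * ‖Y‖ := by gcongr
end
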